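/- arXiv:2108.00234 — 2 statements merged into one kernel-verified Lean document; each statement's English description precedes it below -/
import Mathlib

section
/- The function γ belongs to C^{1,2}((0,T) × ℝ): at every (t,r) ∈ (0,T) × ℝ, γ is continuously differentiable with respect to t and twice continuously differentiable with respect to r. -/
open Real Filter MeasureTheory intervalIntegral

noncomputable def M (a δ b u r : ℝ) : ℝ :=
  Real.exp (-(b - δ^2/(2*a^2))*u + ((b - δ^2/(2*a^2)) - r)/a * (1 - Real.exp (-(a*u)))
    - δ^2/(4*a^3) * (1 - Real.exp (-(a*u)))^2)

/-- The separating curve `α(t)`. -/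
noncomputable def alphaCurve (a δ b T t : ℝ) : ℝ :=
  (b - δ^2/(2*a^2)) * (1 - a*(T - t)/(1 - Real.exp (-(a*(T - t)))))
    - δ^2/(4*a^2) * (1 - Real.exp (-(a*(T - t))))

/-- The Gaussian kernel `φ(z,u,r)`. -/
noncomputable def phiKer (a δ b z u r : ℝ) : ℝ :=
  (Real.sqrt (2*Real.pi*(δ^2/(2*a))*(1 - Real.exp (-(2*a*u)))))⁻¹ *
    Real.exp (-(z - r*Real.exp (-(a*u)) - b*(1 - Real.exp (-(a*u)))
      + δ^2/(2*a^2)*(1 - Real.exp (-(a*u)))^2)^2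
      / (2*(δ^2/(2*a))*(1 - Real.exp (-(2*a*u)))))

/-- The function `γ(t,r) = ∫_0^{T−t} ∫_{α(u+t)}^∞ M(u,r)(1−M(T−u−t,z))φ(z,u,r) dz du`. -/
noncomputable def gammaFun (a δ b T t r : ℝ) : ℝ :=
  ∫ u in (0:ℝ)..(T - t), ∫ z in Set.Ioi (alphaCurve a δ b T (u + t)),
    M a δ b u r * (1 - M a δ b (T - u - t) z) * phiKer a δ b z u r


/-- The coefficient of the short rate in the exponent of the bond price `M`. -/
noncomputable def bondSlope (a s : ℝ) : ℝ := (1 - Real.exp (-(a * s))) / a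

/-- The part of the exponent of the bond price `M` that does not involve the short rate. -/
noncomputable def bondIntercept (a δ b s : ℝ) : ℝ :=
  -(b - δ^2/(2*a^2)) * s + (b - δ^2/(2*a^2)) / a * (1 - Real.exp (-(a*s)))
    - δ^2/(4*a^3) * (1 - Real.exp (-(a*s)))^2

/-- The mean of the Gaussian kernel `phiKer` started from the rate `0`. -/
noncomputable def kernelDrift (a δ b u : ℝ) : ℝ :=
  b * (1 - Real.exp (-(a*u))) - δ^2/(2*a^2) * (1 - Real.exp (-(a*u)))^2

/-- The variance of the Gaussian kernel `phiKer`. -/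
noncomputable def kernelVar (a δ u : ℝ) : ℝ := δ^2/(2*a) * (1 - Real.exp (-(2*a*u)))

/-- The centred Gaussian density of variance `v`. -/
noncomputable def gaussDensity (v x : ℝ) : ℝ :=
  (Real.sqrt (2 * Real.pi * v))⁻¹ * Real.exp (-x^2 / (2 * v))

/-- The upper tail of the centred Gaussian law of variance `v`. -/
noncomputable def gaussTail (v y : ℝ) : ℝ := ∫ z in Set.Ioi y, gaussDensity v z

lemma M_eq_exp (a δ b u r : ℝ) :
    M a δ b u r = Real.exp (bondIntercept a δ b u - bondSlope a u * r) := by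
  unfold M bondIntercept bondSlope
  congr 1
  ring

lemma phiKer_eq_gaussDensity (a δ b z u r : ℝ) :
    phiKer a δ b z u r = gaussDensity (kernelVar a δ u)
      (z - (r * Real.exp (-(a*u)) + kernelDrift a δ b u)) := by
  unfold phiKer gaussDensity kernelVar kernelDrift
  congr 1
  · ring_nf
  · congr 1
    ring_nf

lemma bondSlope_pos {a s : ℝ} (ha : 0 < a) (hs : 0 < s) : 0 < bondSlope a s := by
  unfold bondSlope
  have : Real.exp (-(a * s)) < 1 := by
    rw [Real.exp_lt_one_iff]
    nlinarith [mul_pos ha hs]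
  exact div_pos (by linarith) ha

lemma bondSlope_mul_alphaCurve {a δ b T t : ℝ} (ha : 0 < a) (ht : t < T) :
    bondSlope a (T - t) * alphaCurve a δ b T t = bondIntercept a δ b (T - t) := by
  have h := bondSlope_pos ha (sub_pos.2 ht)
  unfold bondSlope at h
  unfold bondSlope alphaCurve bondIntercept
  have h1 : 1 - Real.exp (-(a * (T - t))) ≠ 0 := by
    intro h0
    simp [h0] at h
  generalize Real.exp (-(a * (T - t))) = e at *
  field_simp
  ring

lemma kernelVar_pos {a δ u : ℝ} (ha : 0 < a) (hδ : 0 < δ) (hu : 0 < u) :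
    0 < kernelVar a δ u := by
  unfold kernelVar
  have : Real.exp (-(2 * a * u)) < 1 := by
    rw [Real.exp_lt_one_iff]
    nlinarith [mul_pos ha hu]
  have : 0 < 1 - Real.exp (-(2 * a * u)) := by linarith
  positivity

lemma kernelVar_ge {a δ u τ : ℝ} (ha : 0 < a) (hu : 0 ≤ u) (huτ : u ≤ τ) :
    δ^2 * Real.exp (-(2 * a * τ)) * u ≤ kernelVar a δ u := by
  have h1 : Real.exp (-(2 * a * u)) * (2 * a * u + 1) ≤ 1 := by
    calc Real.exp (-(2 * a * u)) * (2 * a * u + 1)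
        ≤ Real.exp (-(2 * a * u)) * Real.exp (2 * a * u) := by
          gcongr
          exact Real.add_one_le_exp _
      _ = 1 := by rw [← Real.exp_add]; simp
  have h2 : Real.exp (-(2 * a * τ)) ≤ Real.exp (-(2 * a * u)) := by gcongr
  calc δ^2 * Real.exp (-(2 * a * τ)) * u
      ≤ δ^2 * Real.exp (-(2 * a * u)) * u := by gcongr
    _ = δ^2 / (2 * a) * (Real.exp (-(2 * a * u)) * (2 * a * u)) := by field_simp
    _ ≤ kernelVar a δ u := by
      unfold kernelVar
      gcongr
      linarith

lemma gaussDensity_nonneg (v x : ℝ) : 0 ≤ gaussDensity v x := by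
  unfold gaussDensity
  positivity

lemma gaussDensity_le {v : ℝ} (hv : 0 < v) (x : ℝ) : gaussDensity v x ≤ (Real.sqrt v)⁻¹ := by
  unfold gaussDensity
  have h1 : Real.exp (-x^2 / (2 * v)) ≤ 1 := by
    rw [Real.exp_le_one_iff]
    exact div_nonpos_of_nonpos_of_nonneg (by nlinarith [sq_nonneg x]) (by positivity)
  have h2 : Real.sqrt v ≤ Real.sqrt (2 * Real.pi * v) := by
    apply Real.sqrt_le_sqrt
    nlinarith [Real.pi_gt_three]
  calc _ ≤ (Real.sqrt (2 * Real.pi * v))⁻¹ * 1 := by gcongr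
    _ ≤ (Real.sqrt v)⁻¹ := by
      rw [mul_one]
      exact inv_anti₀ (Real.sqrt_pos.2 hv) h2

lemma gaussDensity_eq_gaussianPDFReal {v : ℝ} (hv : 0 < v) (m x : ℝ) :
    gaussDensity v (x - m) = ProbabilityTheory.gaussianPDFReal m v.toNNReal x := by
  unfold gaussDensity ProbabilityTheory.gaussianPDFReal
  rw [Real.coe_toNNReal v hv.le]

lemma integrable_gaussDensity {v : ℝ} (hv : 0 < v) (m : ℝ) :
    Integrable fun x => gaussDensity v (x - m) := by
  simp_rw [gaussDensity_eq_gaussianPDFReal hv]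
  exact ProbabilityTheory.integrable_gaussianPDFReal _ _

lemma integral_gaussDensity {v : ℝ} (hv : 0 < v) (m : ℝ) :
    ∫ x, gaussDensity v (x - m) = 1 := by
  simp_rw [gaussDensity_eq_gaussianPDFReal hv]
  exact ProbabilityTheory.integral_gaussianPDFReal_eq_one _ (by simpa using hv)

lemma integrable_gaussDensity_zero {v : ℝ} (hv : 0 < v) : Integrable (gaussDensity v) := by
  simpa using integrable_gaussDensity hv 0

lemma continuous_gaussDensity (v : ℝ) : Continuous (gaussDensity v) := by
  unfold gaussDensity
  fun_prop

lemma measurable_uncurry_gaussDensity : Measurable (Function.uncurry gaussDensity) := by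
  unfold gaussDensity Function.uncurry
  fun_prop

lemma gaussTail_nonneg (v y : ℝ) : 0 ≤ gaussTail v y :=
  integral_nonneg fun _ => gaussDensity_nonneg _ _

lemma gaussTail_le_one {v : ℝ} (hv : 0 < v) (y : ℝ) : gaussTail v y ≤ 1 := by
  have h := integral_gaussDensity hv 0
  simp only [sub_zero] at h
  rw [← h]
  exact setIntegral_le_integral (integrable_gaussDensity_zero hv)
    (Eventually.of_forall fun _ => gaussDensity_nonneg _ _)

lemma hasDerivAt_gaussTail {v : ℝ} (hv : 0 < v) (y : ℝ) :
    HasDerivAt (gaussTail v) (-gaussDensity v y) y := by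
  have hi := integrable_gaussDensity_zero hv
  have h : gaussTail v = fun y => (∫ z in Set.Ioi 0, gaussDensity v z)
      - ∫ z in (0:ℝ)..y, gaussDensity v z := by
    funext y
    rw [← integral_Ioi_sub_Ioi' hi.integrableOn hi.integrableOn, gaussTail]
    ring
  rw [h]
  exact ((continuous_gaussDensity v).integral_hasStrictDerivAt 0 y).hasDerivAt.const_sub _

lemma measurable_uncurry_gaussTail : Measurable (Function.uncurry gaussTail) := by
  have h : Function.uncurry gaussTail = fun q : ℝ × ℝ =>
      ∫ z, {x : (ℝ × ℝ) × ℝ | x.1.2 < x.2}.indicator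
        (fun x => gaussDensity x.1.1 x.2) (q, z) := by
    funext q
    rw [Function.uncurry, gaussTail, ← MeasureTheory.integral_indicator measurableSet_Ioi]
    rfl
  rw [h]
  refine (StronglyMeasurable.integral_prod_right' (ν := volume) ?_).measurable
  refine (Measurable.indicator ?_ (measurableSet_lt (by fun_prop) (by fun_prop))).stronglyMeasurable
  exact measurable_uncurry_gaussDensity.comp
    ((measurable_fst.comp measurable_fst).prodMk measurable_snd)

lemma setIntegral_gaussDensity (v m A : ℝ) :
    ∫ z in Set.Ioi A, gaussDensity v (z - m) = gaussTail v (A - m) := by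
  rw [gaussTail, ← MeasureTheory.integral_indicator measurableSet_Ioi, ← MeasureTheory.integral_indicator measurableSet_Ioi,
    ← integral_sub_right_eq_self ((Set.Ioi (A - m)).indicator fun z => gaussDensity v z) m]
  congr 1
  funext z
  simp [Set.indicator]

/-- Completing the square: exponential tilting translates a Gaussian density. -/
lemma exp_mul_gaussDensity {v : ℝ} (hv : 0 < v) (k x : ℝ) :
    Real.exp (k * x) * gaussDensity v x
      = Real.exp (k^2 * v / 2) * gaussDensity v (x - k * v) := by
  unfold gaussDensity
  rw [mul_left_comm, mul_left_comm (Real.exp (k^2 * v / 2)), ← Real.exp_add, ← Real.exp_add]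
  congr 2
  field_simp
  ring

/-- Gaussian integral of the payoff `1 - exp (c - B z)` over a half line. -/
lemma setIntegral_payoff_mul_gaussDensity {v : ℝ} (hv : 0 < v) (m A B c : ℝ) :
    ∫ z in Set.Ioi A, (1 - Real.exp (c - B * z)) * gaussDensity v (z - m)
      = gaussTail v (A - m)
        - Real.exp (c - B * m + B^2 * v / 2) * gaussTail v (A - m + B * v) := by
  have h : ∀ z, (1 - Real.exp (c - B * z)) * gaussDensity v (z - m) = gaussDensity v (z - m)
      - Real.exp (c - B * m + B^2 * v / 2) * gaussDensity v (z - (m - B * v)) := by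
    intro z
    have := exp_mul_gaussDensity hv (-B) (z - m)
    rw [show z - m - -B * v = z - (m - B * v) by ring] at this
    rw [Real.exp_add, mul_assoc, show B^2 = (-B)^2 by ring, ← this, ← mul_assoc, ← Real.exp_add]
    ring_nf
  simp_rw [h]
  rw [MeasureTheory.integral_sub (integrable_gaussDensity hv m).integrableOn
    ((integrable_gaussDensity hv _).integrableOn.const_mul _), MeasureTheory.integral_const_mul,
    setIntegral_gaussDensity, setIntegral_gaussDensity]
  ring_nf

/-- Differentiation under the integral sign, with bounds that are uniform on bounded sets. -/
lemma hasDerivAt_intervalIntegral_of_bound {τ : ℝ} {F F' : ℝ → ℝ → ℝ} {bound : ℝ → ℝ → ℝ}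
    (hτ : 0 ≤ τ)
    (hF : ∀ r, Measurable (F r)) (hF' : ∀ r, Measurable (F' r))
    (hb : ∀ R, IntervalIntegrable (bound R) volume 0 τ)
    (hFb : ∀ R r u, |r| ≤ R → u ∈ Set.Ioc 0 τ → |F r u| ≤ bound R u)
    (hF'b : ∀ R r u, |r| ≤ R → u ∈ Set.Ioc 0 τ → |F' r u| ≤ bound R u)
    (hd : ∀ r, ∀ u ∈ Set.Ioo 0 τ, HasDerivAt (fun r => F r u) (F' r u) r) (r : ℝ) :
    HasDerivAt (fun r => ∫ u in (0:ℝ)..τ, F r u) (∫ u in (0:ℝ)..τ, F' r u) r := by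
  have hR : ∀ x ∈ Metric.ball r 1, |x| ≤ |r| + 1 := by
    intro x hx
    rw [Metric.mem_ball, Real.dist_eq] at hx
    have := abs_add_le (x - r) r
    rw [sub_add_cancel] at this
    linarith
  refine (intervalIntegral.hasDerivAt_integral_of_dominated_loc_of_deriv_le
    (bound := bound (|r| + 1)) (Metric.ball_mem_nhds r one_pos)
    (Eventually.of_forall fun x => (hF x).aestronglyMeasurable) ?_
    (hF' r).aestronglyMeasurable ?_ (hb _) ?_).2
  · refine (hb |r|).mono_fun' (hF r).aestronglyMeasurable ?_
    rw [Set.uIoc_of_le hτ]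
    filter_upwards [ae_restrict_mem measurableSet_Ioc] with u hu
    exact hFb _ _ _ le_rfl hu
  · refine Eventually.of_forall fun u hu x hx => ?_
    rw [Set.uIoc_of_le hτ] at hu
    exact hF'b _ _ _ (hR x hx) hu
  · filter_upwards [Measure.ae_ne volume τ] with u hne hu x hx
    rw [Set.uIoc_of_le hτ] at hu
    exact hd x u ⟨hu.1, lt_of_le_of_ne hu.2 hne⟩

/-- A parametric integral is `C²` when the integrand has two derivatives that are dominated
uniformly on bounded sets. -/
lemma contDiff_two_intervalIntegral_of_bound {τ : ℝ} {F F' F'' : ℝ → ℝ → ℝ}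
    {bound : ℝ → ℝ → ℝ} (hτ : 0 ≤ τ)
    (hF : ∀ r, Measurable (F r)) (hF' : ∀ r, Measurable (F' r)) (hF'' : ∀ r, Measurable (F'' r))
    (hb : ∀ R, IntervalIntegrable (bound R) volume 0 τ)
    (hFb : ∀ R r u, |r| ≤ R → u ∈ Set.Ioc 0 τ → |F r u| ≤ bound R u)
    (hF'b : ∀ R r u, |r| ≤ R → u ∈ Set.Ioc 0 τ → |F' r u| ≤ bound R u)
    (hF''b : ∀ R r u, |r| ≤ R → u ∈ Set.Ioc 0 τ → |F'' r u| ≤ bound R u)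
    (hd : ∀ r, ∀ u ∈ Set.Ioo 0 τ, HasDerivAt (fun r => F r u) (F' r u) r)
    (hd' : ∀ r, ∀ u ∈ Set.Ioo 0 τ, HasDerivAt (fun r => F' r u) (F'' r u) r)
    (hc : ∀ u ∈ Set.Ioo 0 τ, Continuous fun r => F'' r u) :
    ContDiff ℝ 2 (fun r => ∫ u in (0:ℝ)..τ, F r u) := by
  have h1 := hasDerivAt_intervalIntegral_of_bound hτ hF hF' hb hFb hF'b hd
  have h2 := hasDerivAt_intervalIntegral_of_bound hτ hF' hF'' hb hF'b hF''b hd'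
  rw [show (2 : WithTop ℕ∞) = 1 + 1 by norm_num, contDiff_succ_iff_deriv]
  refine ⟨fun r => (h1 r).differentiableAt, by simp, ?_⟩
  rw [show deriv (fun r => ∫ u in (0:ℝ)..τ, F r u) = _ from funext fun r => (h1 r).deriv,
    contDiff_one_iff_deriv]
  refine ⟨fun r => (h2 r).differentiableAt, ?_⟩
  rw [show deriv (fun r => ∫ u in (0:ℝ)..τ, F' r u) = _ from funext fun r => (h2 r).deriv,
    continuous_iff_continuousAt]
  intro r
  refine intervalIntegral.continuousAt_of_dominated_interval (bound := bound (|r| + 1))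
    (Eventually.of_forall fun x => (hF'' x).aestronglyMeasurable) ?_ (hb _) ?_
  · filter_upwards [Metric.ball_mem_nhds r one_pos] with x hx
    refine Eventually.of_forall fun u hu => ?_
    rw [Set.uIoc_of_le hτ] at hu
    refine hF''b _ _ _ ?_ hu
    rw [Metric.mem_ball, Real.dist_eq] at hx
    have := abs_add_le (x - r) r
    rw [sub_add_cancel] at this
    linarith
  · filter_upwards [Measure.ae_ne volume τ] with u hne hu
    rw [Set.uIoc_of_le hτ] at hu
    exact (hc u ⟨hu.1, lt_of_le_of_ne hu.2 hne⟩).continuousAt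

lemma hasDerivAt_exp_mul_gaussTail {v : ℝ} (hv : 0 < v) (k β y ε r : ℝ) :
    HasDerivAt (fun r => Real.exp (k - β * r) * gaussTail v (y - ε * r))
      (-β * (Real.exp (k - β * r) * gaussTail v (y - ε * r))
        + ε * (Real.exp (k - β * r) * gaussDensity v (y - ε * r))) r := by
  have h1 : HasDerivAt (fun r => Real.exp (k - β * r)) (Real.exp (k - β * r) * (-β)) r := by
    refine HasDerivAt.exp ?_
    simpa using ((hasDerivAt_id r).const_mul β).const_sub k
  have h2 : HasDerivAt (fun r => y - ε * r) (-ε) r := by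
    simpa using ((hasDerivAt_id r).const_mul ε).const_sub y
  refine (h1.mul ((hasDerivAt_gaussTail hv _).comp r h2)).congr_deriv ?_
  simp only [Function.comp_apply]
  ring

lemma intervalIntegrable_add_mul_rpow (C D τ : ℝ) :
    IntervalIntegrable (fun u : ℝ => C + D * u ^ (-(1/2) : ℝ)) volume 0 τ :=
  intervalIntegrable_const.add
    ((intervalIntegral.intervalIntegrable_rpow' (by norm_num)).const_mul D)

lemma abs_sub_bounds {x₀ x₁ e₀ e₁ β₀ β₁ B₀ B₁ : ℝ} (h₀ : 0 ≤ x₀) (h₀' : x₀ ≤ e₀)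
    (h₁ : 0 ≤ x₁) (h₁' : x₁ ≤ e₁) (hβ₀ : |β₀| ≤ B₀) (hβ₁ : |β₁| ≤ B₁)
    (hB₀ : 0 ≤ B₀) (hB₁ : 0 ≤ B₁) :
    |x₀ - x₁| ≤ (1 + B₀ + B₀ ^ 2) * e₀ + (1 + B₁ + B₁ ^ 2) * e₁ ∧
    |-β₀ * x₀ + β₁ * x₁| ≤ (1 + B₀ + B₀ ^ 2) * e₀ + (1 + B₁ + B₁ ^ 2) * e₁ ∧
    |β₀ ^ 2 * x₀ - β₁ ^ 2 * x₁| ≤ (1 + B₀ + B₀ ^ 2) * e₀ + (1 + B₁ + B₁ ^ 2) * e₁ := by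
  have key : ∀ {c d : ℝ}, |c| ≤ 1 + B₀ + B₀ ^ 2 → |d| ≤ 1 + B₁ + B₁ ^ 2 →
      |c * x₀ + d * x₁| ≤ (1 + B₀ + B₀ ^ 2) * e₀ + (1 + B₁ + B₁ ^ 2) * e₁ := by
    intro c d hc hd
    refine (abs_add_le _ _).trans ?_
    rw [abs_mul, abs_mul, abs_of_nonneg h₀, abs_of_nonneg h₁]
    gcongr
  have hs₀ : β₀ ^ 2 ≤ B₀ ^ 2 := sq_le_sq' (neg_le_of_abs_le hβ₀) (le_of_abs_le hβ₀)
  have hs₁ : β₁ ^ 2 ≤ B₁ ^ 2 := sq_le_sq' (neg_le_of_abs_le hβ₁) (le_of_abs_le hβ₁)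
  refine ⟨?_, key ?_ ?_, ?_⟩
  · have := key (c := 1) (d := -1) (by rw [abs_one]; nlinarith) (by rw [abs_neg, abs_one]; nlinarith)
    convert this using 2
    ring
  · rw [abs_neg]
    nlinarith
  · nlinarith
  · have := key (c := β₀ ^ 2) (d := -β₁ ^ 2) (by rw [abs_sq]; nlinarith)
      (by rw [abs_neg, abs_sq]; nlinarith)
    convert this using 2
    ring

/-- `C²` regularity in the initial rate of an integral of differences of tilted Gaussian tails
whose boundary terms cancel. -/
lemma contDiff_two_integral_exp_mul_gaussTail {τ D : ℝ} (hτ : 0 ≤ τ)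
    {k₀ k₁ β₀ β₁ ε y₀ y₁ v : ℝ → ℝ} (hk₀ : Continuous k₀) (hk₁ : Continuous k₁)
    (hβ₀ : Continuous β₀) (hβ₁ : Continuous β₁) (hε : Continuous ε)
    (hy₀ : Measurable y₀) (hy₁ : Measurable y₁) (hv : Measurable v)
    (hvpos : ∀ u ∈ Set.Ioc 0 τ, 0 < v u)
    (hvD : ∀ u ∈ Set.Ioc 0 τ, (Real.sqrt (v u))⁻¹ ≤ D * u ^ (-(1/2) : ℝ))
    (hcancel : ∀ u ∈ Set.Ioo 0 τ, ∀ r,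
      Real.exp (k₀ u - β₀ u * r) * gaussDensity (v u) (y₀ u - ε u * r)
        = Real.exp (k₁ u - β₁ u * r) * gaussDensity (v u) (y₁ u - ε u * r)) :
    ContDiff ℝ 2 (fun r => ∫ u in (0:ℝ)..τ,
      (Real.exp (k₀ u - β₀ u * r) * gaussTail (v u) (y₀ u - ε u * r)
        - Real.exp (k₁ u - β₁ u * r) * gaussTail (v u) (y₁ u - ε u * r))) := by
  have hbdd : ∀ {f : ℝ → ℝ}, Continuous f → ∃ C, 0 ≤ C ∧ ∀ u ∈ Set.Ioc 0 τ, |f u| ≤ C := by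
    intro f hf
    obtain ⟨C, hC⟩ := isCompact_Icc.exists_bound_of_continuousOn (s := Set.Icc 0 τ) hf.continuousOn
    exact ⟨C, (norm_nonneg _).trans (hC 0 ⟨le_rfl, hτ⟩), fun u hu => hC u ⟨hu.1.le, hu.2⟩⟩
  have hexp : ∀ {k β : ℝ → ℝ}, Continuous k → Continuous β → ∃ C : ℝ → ℝ,
      ∀ R r u, |r| ≤ R → u ∈ Set.Ioc 0 τ → Real.exp (k u - β u * r) ≤ C R := by
    intro k β hk hβ
    obtain ⟨Ck, hCk0, hCk⟩ := hbdd hk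
    obtain ⟨Cβ, hCβ0, hCβ⟩ := hbdd hβ
    refine ⟨fun R => Real.exp (Ck + Cβ * R), fun R r u hr hu => ?_⟩
    rw [Real.exp_le_exp]
    have h1 := hCk u hu
    have h2 : |β u * r| ≤ Cβ * R := by
      rw [abs_mul]
      exact mul_le_mul (hCβ u hu) hr (abs_nonneg _) hCβ0
    have h3 := le_abs_self (k u)
    have h4 := neg_abs_le (β u * r)
    linarith
  obtain ⟨E₀, hE₀⟩ := hexp hk₀ hβ₀
  obtain ⟨E₁, hE₁⟩ := hexp hk₁ hβ₁
  obtain ⟨B₀, hB₀0, hB₀⟩ := hbdd hβ₀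
  obtain ⟨B₁, hB₁0, hB₁⟩ := hbdd hβ₁
  obtain ⟨Ce, hCe0, hCe⟩ := hbdd hε
  have hL : ∀ {e v y E : ℝ}, 0 < v → Real.exp e ≤ E →
      0 ≤ Real.exp e * gaussTail v y ∧ Real.exp e * gaussTail v y ≤ E := by
    intro e v y E hv he
    refine ⟨mul_nonneg (Real.exp_pos _).le (gaussTail_nonneg _ _), ?_⟩
    calc Real.exp e * gaussTail v y ≤ E * 1 :=
          mul_le_mul he (gaussTail_le_one hv _) (gaussTail_nonneg _ _)
            ((Real.exp_pos _).le.trans he)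
      _ = E := mul_one _
  have htail : ∀ {R r u : ℝ}, |r| ≤ R → u ∈ Set.Ioc 0 τ →
      0 ≤ ((B₁ + B₀) * Ce * E₀ R * D) * u ^ (-(1/2) : ℝ) := by
    intro R r u hr hu
    have h1 : 0 ≤ E₀ R := (Real.exp_pos _).le.trans (hE₀ R r u hr hu)
    have h2 : 0 ≤ D * u ^ (-(1/2) : ℝ) := le_trans (by positivity) (hvD u hu)
    rw [mul_assoc]
    positivity
  have hmT : ∀ {y : ℝ → ℝ}, Measurable y → ∀ r,
      Measurable fun u => gaussTail (v u) (y u - ε u * r) := fun hy r =>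
    measurable_uncurry_gaussTail.comp (hv.prodMk (hy.sub (hε.measurable.mul_const r)))
  have hmP : ∀ {y : ℝ → ℝ}, Measurable y → ∀ r,
      Measurable fun u => gaussDensity (v u) (y u - ε u * r) := fun hy r =>
    measurable_uncurry_gaussDensity.comp (hv.prodMk (hy.sub (hε.measurable.mul_const r)))
  have hmE : ∀ {k β : ℝ → ℝ}, Continuous k → Continuous β → ∀ r,
      Measurable fun u => Real.exp (k u - β u * r) := by
    intro k β hk hβ r
    exact (by fun_prop : Continuous fun u => Real.exp (k u - β u * r)).measurable
  have hm₀ : ∀ r, Measurable fun u =>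
      Real.exp (k₀ u - β₀ u * r) * gaussTail (v u) (y₀ u - ε u * r) :=
    fun r => (hmE hk₀ hβ₀ r).mul (hmT hy₀ r)
  have hm₁ : ∀ r, Measurable fun u =>
      Real.exp (k₁ u - β₁ u * r) * gaussTail (v u) (y₁ u - ε u * r) :=
    fun r => (hmE hk₁ hβ₁ r).mul (hmT hy₁ r)
  refine contDiff_two_intervalIntegral_of_bound
    (F' := fun r u => -β₀ u * (Real.exp (k₀ u - β₀ u * r) * gaussTail (v u) (y₀ u - ε u * r))
        + β₁ u * (Real.exp (k₁ u - β₁ u * r) * gaussTail (v u) (y₁ u - ε u * r)))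
    (F'' := fun r u => β₀ u ^ 2 * (Real.exp (k₀ u - β₀ u * r) * gaussTail (v u) (y₀ u - ε u * r))
        - β₁ u ^ 2 * (Real.exp (k₁ u - β₁ u * r) * gaussTail (v u) (y₁ u - ε u * r))
        + (β₁ u - β₀ u) * ε u
          * (Real.exp (k₀ u - β₀ u * r) * gaussDensity (v u) (y₀ u - ε u * r)))
    (bound := fun R u => ((1 + B₀ + B₀ ^ 2) * E₀ R + (1 + B₁ + B₁ ^ 2) * E₁ R)
        + ((B₁ + B₀) * Ce * E₀ R * D) * u ^ (-(1/2) : ℝ))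
    hτ ?_ ?_ ?_ ?_ ?_ ?_ ?_ ?_ ?_ ?_
  · exact fun r => (hm₀ r).sub (hm₁ r)
  · exact fun r => (hβ₀.measurable.neg.mul (hm₀ r)).add (hβ₁.measurable.mul (hm₁ r))
  · exact fun r => (((hβ₀.measurable.pow_const 2).mul (hm₀ r)).sub
      ((hβ₁.measurable.pow_const 2).mul (hm₁ r))).add
      (((hβ₁.measurable.sub hβ₀.measurable).mul hε.measurable).mul
        ((hmE hk₀ hβ₀ r).mul (hmP hy₀ r)))
  · exact fun R => intervalIntegrable_add_mul_rpow _ _ _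
  · intro R r u hr hu
    obtain ⟨h0, h0'⟩ := hL (y := y₀ u - ε u * r) (hvpos u hu) (hE₀ R r u hr hu)
    obtain ⟨h1, h1'⟩ := hL (y := y₁ u - ε u * r) (hvpos u hu) (hE₁ R r u hr hu)
    exact (abs_sub_bounds h0 h0' h1 h1' (hB₀ u hu) (hB₁ u hu) hB₀0 hB₁0).1.trans
      (le_add_of_nonneg_right (htail hr hu))
  · intro R r u hr hu
    obtain ⟨h0, h0'⟩ := hL (y := y₀ u - ε u * r) (hvpos u hu) (hE₀ R r u hr hu)
    obtain ⟨h1, h1'⟩ := hL (y := y₁ u - ε u * r) (hvpos u hu) (hE₁ R r u hr hu)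
    exact (abs_sub_bounds h0 h0' h1 h1' (hB₀ u hu) (hB₁ u hu) hB₀0 hB₁0).2.1.trans
      (le_add_of_nonneg_right (htail hr hu))
  · intro R r u hr hu
    obtain ⟨h0, h0'⟩ := hL (y := y₀ u - ε u * r) (hvpos u hu) (hE₀ R r u hr hu)
    obtain ⟨h1, h1'⟩ := hL (y := y₁ u - ε u * r) (hvpos u hu) (hE₁ R r u hr hu)
    refine (abs_add_le _ _).trans (add_le_add
      (abs_sub_bounds h0 h0' h1 h1' (hB₀ u hu) (hB₁ u hu) hB₀0 hB₁0).2.2 ?_)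
    have hE := hE₀ R r u hr hu
    have hp := (gaussDensity_le (hvpos u hu) (y₀ u - ε u * r)).trans (hvD u hu)
    have hp0 := gaussDensity_nonneg (v u) (y₀ u - ε u * r)
    rw [abs_mul, abs_mul, abs_of_nonneg (mul_nonneg (Real.exp_pos _).le hp0)]
    calc |β₁ u - β₀ u| * |ε u| * (Real.exp (k₀ u - β₀ u * r) *
            gaussDensity (v u) (y₀ u - ε u * r))
        ≤ (B₁ + B₀) * Ce * (E₀ R * (D * u ^ (-(1/2) : ℝ))) := by
          refine mul_le_mul (mul_le_mul ?_ (hCe u hu) (abs_nonneg _) (by positivity))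
            (mul_le_mul hE hp hp0 ((Real.exp_pos _).le.trans hE))
            (mul_nonneg (Real.exp_pos _).le hp0) (by positivity)
          exact (abs_sub _ _).trans (add_le_add (hB₁ u hu) (hB₀ u hu))
      _ = _ := by ring
  · intro r u hu
    have hv' := hvpos u ⟨hu.1, hu.2.le⟩
    refine ((hasDerivAt_exp_mul_gaussTail hv' (k₀ u) (β₀ u) (y₀ u) (ε u) r).sub
      (hasDerivAt_exp_mul_gaussTail hv' (k₁ u) (β₁ u) (y₁ u) (ε u) r)).congr_deriv ?_
    rw [← hcancel u hu r]
    ring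
  · intro r u hu
    have hv' := hvpos u ⟨hu.1, hu.2.le⟩
    refine (((hasDerivAt_exp_mul_gaussTail hv' (k₀ u) (β₀ u) (y₀ u) (ε u) r).const_mul
      (-β₀ u)).add ((hasDerivAt_exp_mul_gaussTail hv' (k₁ u) (β₁ u) (y₁ u) (ε u) r).const_mul
      (β₁ u))).congr_deriv ?_
    rw [← hcancel u hu r]
    ring
  · intro u hu
    have hv' := hvpos u ⟨hu.1, hu.2.le⟩
    have hT : Continuous (gaussTail (v u)) :=
      continuous_iff_continuousAt.2 fun y => (hasDerivAt_gaussTail hv' y).continuousAt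
    have hP := continuous_gaussDensity (v u)
    fun_prop

lemma continuous_bondSlope (a : ℝ) : Continuous (bondSlope a) := by
  unfold bondSlope
  fun_prop

lemma continuous_bondIntercept (a δ b : ℝ) : Continuous (bondIntercept a δ b) := by
  unfold bondIntercept
  fun_prop

lemma continuous_kernelDrift (a δ b : ℝ) : Continuous (kernelDrift a δ b) := by
  unfold kernelDrift
  fun_prop

lemma continuous_kernelVar (a δ : ℝ) : Continuous (kernelVar a δ) := by
  unfold kernelVar
  fun_prop

lemma inv_sqrt_kernelVar_le {a δ u τ : ℝ} (ha : 0 < a) (hδ : 0 < δ) (hu : 0 < u) (huτ : u ≤ τ) :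
    (Real.sqrt (kernelVar a δ u))⁻¹
      ≤ (Real.sqrt (δ^2 * Real.exp (-(2 * a * τ))))⁻¹ * u ^ (-(1/2) : ℝ) := by
  rw [Real.rpow_neg hu.le, ← Real.sqrt_eq_rpow, ← mul_inv, ← Real.sqrt_mul (by positivity)]
  exact inv_anti₀ (Real.sqrt_pos.2 (by positivity))
    (Real.sqrt_le_sqrt (kernelVar_ge ha hu.le huτ))

lemma measurable_alphaCurve (a δ b T : ℝ) : Measurable (alphaCurve a δ b T) := by
  unfold alphaCurve
  fun_prop

/-- Closed form of the integral over `z` in the definition of `gammaFun`. -/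
lemma setIntegral_gammaFun_integrand {a δ b T t u : ℝ} (ha : 0 < a) (hδ : 0 < δ) (hu : 0 < u)
    (r : ℝ) :
    ∫ z in Set.Ioi (alphaCurve a δ b T (u + t)),
        M a δ b u r * (1 - M a δ b (T - u - t) z) * phiKer a δ b z u r
      = Real.exp (bondIntercept a δ b u - bondSlope a u * r)
          * gaussTail (kernelVar a δ u)
            (alphaCurve a δ b T (u + t) - kernelDrift a δ b u - Real.exp (-(a*u)) * r)
        - Real.exp (bondIntercept a δ b u + bondIntercept a δ b (T - u - t)
              - bondSlope a (T - u - t) * kernelDrift a δ b u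
              + bondSlope a (T - u - t) ^ 2 * kernelVar a δ u / 2
              - (bondSlope a u + bondSlope a (T - u - t) * Real.exp (-(a*u))) * r)
          * gaussTail (kernelVar a δ u)
            (alphaCurve a δ b T (u + t) - kernelDrift a δ b u
              + bondSlope a (T - u - t) * kernelVar a δ u - Real.exp (-(a*u)) * r) := by
  simp_rw [M_eq_exp, phiKer_eq_gaussDensity, mul_assoc]
  rw [MeasureTheory.integral_const_mul, setIntegral_payoff_mul_gaussDensity (kernelVar_pos ha hδ hu),
    mul_sub, ← mul_assoc, ← Real.exp_add]
  ring_nf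

lemma contDiff_two_gammaFun {a δ b T t : ℝ} (ha : 0 < a) (hδ : 0 < δ) (ht : t < T) :
    ContDiff ℝ 2 (fun r => gammaFun a δ b T t r) := by
  have hτ : 0 ≤ T - t := by linarith
  have h1 := continuous_bondSlope a
  have h2 := continuous_bondIntercept a δ b
  have h3 := continuous_kernelDrift a δ b
  have h4 := continuous_kernelVar a δ
  have h5 := measurable_alphaCurve a δ b T
  have h3' := h3.measurable
  have h4' := h4.measurable
  have h1' := h1.measurable
  have key := contDiff_two_integral_exp_mul_gaussTail (τ := T - t)
    (k₀ := bondIntercept a δ b)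
    (k₁ := fun u => bondIntercept a δ b u + bondIntercept a δ b (T - u - t)
              - bondSlope a (T - u - t) * kernelDrift a δ b u
              + bondSlope a (T - u - t) ^ 2 * kernelVar a δ u / 2)
    (β₀ := bondSlope a)
    (β₁ := fun u => bondSlope a u + bondSlope a (T - u - t) * Real.exp (-(a*u)))
    (ε := fun u => Real.exp (-(a*u)))
    (y₀ := fun u => alphaCurve a δ b T (u + t) - kernelDrift a δ b u)
    (y₁ := fun u => alphaCurve a δ b T (u + t) - kernelDrift a δ b u
              + bondSlope a (T - u - t) * kernelVar a δ u)
    (v := kernelVar a δ) hτ h2 (by fun_prop) h1 (by fun_prop) (by fun_prop)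
    (by fun_prop) (by fun_prop) h4' (fun u hu => kernelVar_pos ha hδ hu.1)
    (fun u hu => inv_sqrt_kernelVar_le ha hδ hu.1 hu.2) ?_
  · convert key using 2 with r
    refine intervalIntegral.integral_congr_ae (Eventually.of_forall fun u hu => ?_)
    rw [Set.uIoc_of_le hτ] at hu
    exact setIntegral_gammaFun_integrand ha hδ hu.1 r
  · intro u hu r
    have hA := bondSlope_mul_alphaCurve (a := a) (δ := δ) (b := b) (T := T) (t := u + t) ha
      (by linarith [hu.2])
    rw [show T - (u + t) = T - u - t by ring] at hA
    have hv := kernelVar_pos ha hδ hu.1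
    unfold gaussDensity
    rw [mul_left_comm, mul_left_comm (Real.exp (_ + _ - _ + _ - _)), ← Real.exp_add,
      ← Real.exp_add, ← hA]
    congr 2
    field_simp
    ring

/-- The positive part of `1 - exp (c s - B s * z)`, frozen at its value at `s = 0` for
negative `s`. -/
noncomputable def truncPayoff (c B : ℝ → ℝ) (s z : ℝ) : ℝ :=
  max 0 (1 - Real.exp (c (max s 0) - B (max s 0) * z))

/-- The derivative of `truncPayoff` in `s`, wherever it exists. -/
noncomputable def truncPayoffDeriv (c B : ℝ → ℝ) (s z : ℝ) : ℝ :=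
  if 0 < s ∧ c s - B s * z < 0 then
    -(Real.exp (c s - B s * z) * (deriv c s - deriv B s * z)) else 0

lemma truncPayoff_nonneg (c B : ℝ → ℝ) (s z : ℝ) : 0 ≤ truncPayoff c B s z := le_max_left _ _

lemma truncPayoff_le_one (c B : ℝ → ℝ) (s z : ℝ) : truncPayoff c B s z ≤ 1 :=
  max_le zero_le_one (by linarith [Real.exp_pos (c (max s 0) - B (max s 0) * z)])

lemma truncPayoff_of_nonpos {c B : ℝ → ℝ} (hc0 : c 0 = 0) (hB0 : B 0 = 0) {s : ℝ} (hs : s ≤ 0)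
    (z : ℝ) : truncPayoff c B s z = 0 := by
  simp [truncPayoff, max_eq_right hs, hc0, hB0]

lemma truncPayoff_of_pos_of_neg {c B : ℝ → ℝ} {s z : ℝ} (hs : 0 < s) (h : c s - B s * z ≤ 0) :
    truncPayoff c B s z = 1 - Real.exp (c s - B s * z) := by
  rw [truncPayoff, max_eq_left hs.le, max_eq_right]
  linarith [Real.exp_le_one_iff.2 h]

lemma truncPayoff_of_pos_of_pos {c B : ℝ → ℝ} {s z : ℝ} (hs : 0 < s) (h : 0 ≤ c s - B s * z) :
    truncPayoff c B s z = 0 := by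
  rw [truncPayoff, max_eq_left hs.le, max_eq_left]
  linarith [Real.one_le_exp h]

lemma continuous_uncurry_truncPayoff {c B : ℝ → ℝ} (hc : Continuous c) (hB : Continuous B) :
    Continuous fun q : ℝ × ℝ => truncPayoff c B q.1 q.2 := by
  unfold truncPayoff
  fun_prop

lemma measurable_uncurry_truncPayoffDeriv {c B : ℝ → ℝ} (hc : Continuous c) (hB : Continuous B) :
    Measurable fun q : ℝ × ℝ => truncPayoffDeriv c B q.1 q.2 := by
  have hm : Measurable fun q : ℝ × ℝ => c q.1 - B q.1 * q.2 :=
    (by fun_prop : Continuous fun q : ℝ × ℝ => c q.1 - B q.1 * q.2).measurable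
  have hdc := measurable_deriv c
  have hdB := measurable_deriv B
  unfold truncPayoffDeriv
  refine Measurable.ite ((measurableSet_lt measurable_const measurable_fst).inter
    (measurableSet_lt hm measurable_const)) ?_ measurable_const
  fun_prop

lemma hasDerivAt_exp_sub_mul {c B : ℝ → ℝ} (hc : Differentiable ℝ c) (hB : Differentiable ℝ B)
    (s z : ℝ) : HasDerivAt (fun s => Real.exp (c s - B s * z))
      (Real.exp (c s - B s * z) * (deriv c s - deriv B s * z)) s :=
  ((hc s).hasDerivAt.sub ((hB s).hasDerivAt.mul_const z)).exp

/-- Away from the kink, `truncPayoff` is continuously differentiable in `s`. -/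
lemma truncPayoff_hasDerivAt_and_continuousAt {c B : ℝ → ℝ} (hc : ContDiff ℝ 1 c)
    (hB : ContDiff ℝ 1 B) (hc0 : c 0 = 0) (hB0 : B 0 = 0) {s z : ℝ} (hs : s ≠ 0)
    (hz : 0 < s → c s - B s * z ≠ 0) :
    HasDerivAt (fun s => truncPayoff c B s z) (truncPayoffDeriv c B s z) s ∧
      ContinuousAt (fun s => truncPayoffDeriv c B s z) s := by
  have hcd := hc.continuous_deriv le_rfl
  have hBd := hB.continuous_deriv le_rfl
  have hcc := hc.continuous
  have hBc := hB.continuous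
  have hg : Continuous fun s => c s - B s * z := by fun_prop
  rcases lt_or_gt_of_ne hs with hs | hs
  · have h0 : ∀ᶠ s' in nhds s, s' < 0 := eventually_lt_nhds hs
    have hD : ∀ s' : ℝ, s' < 0 → truncPayoffDeriv c B s' z = 0 := fun s' h =>
      if_neg fun hh => absurd hh.1 (not_lt.2 h.le)
    refine ⟨?_, ?_⟩
    · rw [hD s hs]
      exact (hasDerivAt_const s (0:ℝ)).congr_of_eventuallyEq
        (h0.mono fun s' h => truncPayoff_of_nonpos hc0 hB0 h.le z)
    · exact continuousAt_const.congr (h0.mono fun s' h => (hD s' h).symm)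
  · have h0 : ∀ᶠ s' in nhds s, 0 < s' := eventually_gt_nhds hs
    rcases lt_or_gt_of_ne (hz hs) with h | h
    · have h1 : ∀ᶠ s' in nhds s, c s' - B s' * z < 0 :=
        hg.continuousAt.eventually_lt continuousAt_const h
      have hD : ∀ s' : ℝ, 0 < s' → c s' - B s' * z < 0 → truncPayoffDeriv c B s' z
          = -(Real.exp (c s' - B s' * z) * (deriv c s' - deriv B s' * z)) :=
        fun s' h h' => if_pos ⟨h, h'⟩
      refine ⟨?_, ?_⟩
      · rw [hD s hs h]
        refine ((hasDerivAt_exp_sub_mul (hc.differentiable one_ne_zero)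
          (hB.differentiable one_ne_zero) s z).const_sub 1).congr_of_eventuallyEq ?_
        filter_upwards [h0, h1] with s' h0 h1
        exact truncPayoff_of_pos_of_neg h0 h1.le
      · have hcont : Continuous fun s' =>
            -(Real.exp (c s' - B s' * z) * (deriv c s' - deriv B s' * z)) := by fun_prop
        refine hcont.continuousAt.congr ?_
        filter_upwards [h0, h1] with s' h0 h1
        exact (hD s' h0 h1).symm
    · have h1 : ∀ᶠ s' in nhds s, 0 < c s' - B s' * z :=
        continuousAt_const.eventually_lt hg.continuousAt h
      have hD : ∀ s' : ℝ, 0 < c s' - B s' * z → truncPayoffDeriv c B s' z = 0 :=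
        fun s' h => if_neg fun hh => absurd hh.2 (not_lt.2 h.le)
      refine ⟨?_, ?_⟩
      · rw [hD s h]
        refine (hasDerivAt_const s (0:ℝ)).congr_of_eventuallyEq ?_
        filter_upwards [h0, h1] with s' h0 h1
        exact truncPayoff_of_pos_of_pos h0 h1.le
      · exact continuousAt_const.congr (h1.mono fun s' h => (hD s' h).symm)

/-- Exponential-in-`z` bounds for the Lipschitz constant and the derivative of `truncPayoff`. -/
lemma exists_truncPayoff_bound {c B : ℝ → ℝ} (hc : ContDiff ℝ 1 c) (hB : ContDiff ℝ 1 B) {T : ℝ}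
    (hT : 0 ≤ T) : ∃ C K : ℝ, 0 ≤ C ∧ 0 ≤ K ∧
      (∀ z s s', s ≤ T → s' ≤ T →
        |truncPayoff c B s z - truncPayoff c B s' z| ≤ C * Real.exp (K * |z|) * |s - s'|) ∧
      ∀ z s, s ≤ T → |truncPayoffDeriv c B s z| ≤ C * Real.exp (K * |z|) := by
  have hbdd : ∀ {f : ℝ → ℝ}, Continuous f → ∃ C, ∀ u ∈ Set.Icc 0 T, |f u| ≤ C := fun hf =>
    isCompact_Icc.exists_bound_of_continuousOn hf.continuousOn
  obtain ⟨C₁, h₁⟩ := hbdd hc.continuous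
  obtain ⟨C₂, h₂⟩ := hbdd hB.continuous
  obtain ⟨C₃, h₃⟩ := hbdd (hc.continuous_deriv le_rfl)
  obtain ⟨C₄, h₄⟩ := hbdd (hB.continuous_deriv le_rfl)
  have h0 : (0:ℝ) ∈ Set.Icc 0 T := ⟨le_rfl, hT⟩
  have hC₁ := (abs_nonneg _).trans (h₁ 0 h0)
  have hC₂ := (abs_nonneg _).trans (h₂ 0 h0)
  have hC₃ := (abs_nonneg _).trans (h₃ 0 h0)
  have hC₄ := (abs_nonneg _).trans (h₄ 0 h0)
  have hder : ∀ z, ∀ s ∈ Set.Icc 0 T,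
      |Real.exp (c s - B s * z) * (deriv c s - deriv B s * z)|
        ≤ Real.exp C₁ * (C₃ + C₄) * Real.exp ((C₂ + 1) * |z|) := by
    intro z s hs
    have e1 : c s - B s * z ≤ C₁ + C₂ * |z| := by
      have a1 := le_of_abs_le (h₁ s hs)
      have a2 : |B s * z| ≤ C₂ * |z| := by
        rw [abs_mul]
        exact mul_le_mul_of_nonneg_right (h₂ s hs) (abs_nonneg _)
      linarith [neg_abs_le (B s * z)]
    have e2 : |deriv c s - deriv B s * z| ≤ (C₃ + C₄) * Real.exp |z| := by
      have b0 := Real.add_one_le_exp |z|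
      have b1 := abs_nonneg z
      calc |deriv c s - deriv B s * z| ≤ |deriv c s| + |deriv B s| * |z| := by
            rw [← abs_mul]
            exact abs_sub _ _
        _ ≤ C₃ * Real.exp |z| + C₄ * Real.exp |z| := by
            refine add_le_add ?_ (mul_le_mul (h₄ s hs) (by linarith) b1 hC₄)
            exact (h₃ s hs).trans (le_mul_of_one_le_right hC₃ (by linarith))
        _ = _ := by ring
    rw [abs_mul, abs_of_pos (Real.exp_pos _)]
    calc _ ≤ Real.exp (C₁ + C₂ * |z|) * ((C₃ + C₄) * Real.exp |z|) :=
          mul_le_mul (Real.exp_le_exp.2 e1) e2 (abs_nonneg _) (Real.exp_pos _).le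
      _ = _ := by
          rw [add_mul C₂ 1, one_mul, Real.exp_add, Real.exp_add]
          ring
  refine ⟨Real.exp C₁ * (C₃ + C₄), C₂ + 1, by positivity, by positivity, ?_, ?_⟩
  · intro z s s' hs hs'
    have hmem : ∀ {s : ℝ}, s ≤ T → max s 0 ∈ Set.Icc 0 T := fun h =>
      ⟨le_max_right _ _, max_le h hT⟩
    have hmv := (convex_Icc (0:ℝ) T).norm_image_sub_le_of_norm_hasDerivWithin_le
      (fun x _ => (hasDerivAt_exp_sub_mul (hc.differentiable one_ne_zero)
        (hB.differentiable one_ne_zero) x z).hasDerivWithinAt)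
      (fun x hx => hder z x hx) (hmem hs) (hmem hs')
    rw [Real.norm_eq_abs, Real.norm_eq_abs] at hmv
    calc |truncPayoff c B s z - truncPayoff c B s' z|
        ≤ |Real.exp (c (max s' 0) - B (max s' 0) * z)
            - Real.exp (c (max s 0) - B (max s 0) * z)| := by
          unfold truncPayoff
          refine (abs_max_sub_max_le_max _ _ _ _).trans ?_
          rw [sub_self, abs_zero, max_eq_right (abs_nonneg _)]
          refine le_of_eq ?_
          congr 1
          ring
      _ ≤ _ := hmv
      _ ≤ _ := by
          gcongr ?_ * ?_
          refine (abs_max_sub_max_le_max _ _ _ _).trans ?_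
          rw [sub_self, abs_zero, max_eq_left (abs_nonneg _), abs_sub_comm]
  · intro z s hs
    unfold truncPayoffDeriv
    split_ifs with h
    · rw [abs_neg]
      exact hder z s ⟨h.1.le, hs⟩
    · rw [abs_zero]
      positivity

/-- Integrability of a family of Gaussian densities against an exponential weight. -/
lemma integrable_mul_exp_mul_gaussDensity {T : ℝ} {N m v : ℝ → ℝ} (hN : Continuous N)
    (hm : Continuous m) (hv : Continuous v) (hvpos : ∀ u ∈ Set.Ioc 0 T, 0 < v u) (k : ℝ) :
    Integrable (fun q : ℝ × ℝ => N q.1 * (Real.exp (k * q.2) * gaussDensity (v q.1) (q.2 - m q.1)))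
      ((volume.restrict (Set.Ioc 0 T)).prod volume) := by
  have hform : ∀ u ∈ Set.Ioc 0 T, ∀ z,
      N u * (Real.exp (k * z) * gaussDensity (v u) (z - m u))
        = N u * Real.exp (k * m u + k ^ 2 * v u / 2)
          * gaussDensity (v u) (z - (m u + k * v u)) := by
    intro u hu z
    have h := exp_mul_gaussDensity (hvpos u hu) k (z - m u)
    rw [show k * z = k * m u + k * (z - m u) by ring, Real.exp_add, mul_assoc, h, Real.exp_add,
      show z - (m u + k * v u) = z - m u - k * v u by ring]
    ring
  have hmeas : Measurable fun q : ℝ × ℝ =>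
      N q.1 * (Real.exp (k * q.2) * gaussDensity (v q.1) (q.2 - m q.1)) := by
    have h1 : Measurable fun q : ℝ × ℝ => gaussDensity (v q.1) (q.2 - m q.1) :=
      measurable_uncurry_gaussDensity.comp ((hv.measurable.comp measurable_fst).prodMk
        (measurable_snd.sub (hm.measurable.comp measurable_fst)))
    exact (hN.measurable.comp measurable_fst).mul ((by fun_prop : Measurable fun q : ℝ × ℝ =>
      Real.exp (k * q.2)).mul h1)
  rw [integrable_prod_iff hmeas.aestronglyMeasurable]
  constructor
  · filter_upwards [ae_restrict_mem measurableSet_Ioc] with u hu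
    simp_rw [hform u hu]
    exact (integrable_gaussDensity (hvpos u hu) _).const_mul _
  · have hc : Continuous fun u => |N u * Real.exp (k * m u + k ^ 2 * v u / 2)| := by fun_prop
    have hi : Integrable (fun u => |N u * Real.exp (k * m u + k ^ 2 * v u / 2)|)
        (volume.restrict (Set.Ioc 0 T)) :=
      (hc.continuousOn.integrableOn_Icc).mono_set Set.Ioc_subset_Icc_self
    refine hi.congr ?_
    filter_upwards [ae_restrict_mem measurableSet_Ioc] with u hu
    simp_rw [hform u hu, norm_mul _ (gaussDensity _ _), Real.norm_eq_abs,
      abs_of_nonneg (gaussDensity_nonneg _ _)]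
    rw [MeasureTheory.integral_const_mul, integral_gaussDensity (hvpos u hu), mul_one]

/-- `C¹` regularity in the horizon `τ` of the integral of `truncPayoff c B (τ - u) z` against a
weight in `(u, z)` with all exponential moments in `z`. -/
lemma contDiffAt_integral_truncPayoff {c B : ℝ → ℝ} (hc : ContDiff ℝ 1 c) (hB : ContDiff ℝ 1 B)
    (hc0 : c 0 = 0) (hB0 : B 0 = 0) (hBpos : ∀ s, 0 < s → 0 < B s) {T τ₀ : ℝ} (hT : 0 ≤ T)
    (hτ₀ : τ₀ < T) {w : ℝ × ℝ → ℝ} (hw : Measurable w)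
    (hwint : ∀ K, Integrable (fun q : ℝ × ℝ => Real.exp (K * q.2) * w q)
      ((volume.restrict (Set.Ioc 0 T)).prod volume)) :
    ContDiffAt ℝ 1 (fun τ => ∫ q : ℝ × ℝ, truncPayoff c B (τ - q.1) q.2 * w q
      ∂((volume.restrict (Set.Ioc 0 T)).prod volume)) τ₀ := by
  set μ : Measure (ℝ × ℝ) := (volume.restrict (Set.Ioc 0 T)).prod volume with hμ
  obtain ⟨C, K, hC, hK, hlip, hder⟩ := exists_truncPayoff_bound hc hB hT
  have hpos : ∀ᵐ q ∂μ, 0 < q.1 :=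
    Measure.quasiMeasurePreserving_fst.ae
      ((ae_restrict_mem measurableSet_Ioc).mono fun u (hu : u ∈ Set.Ioc 0 T) => hu.1)
  have hbound : Integrable (fun q : ℝ × ℝ => C * Real.exp (K * |q.2|) * |w q|) μ := by
    refine (((hwint K).norm.add (hwint (-K)).norm).const_mul C).mono'
      (by fun_prop) (Eventually.of_forall fun q => ?_)
    simp only [Pi.add_apply, norm_mul, Real.norm_eq_abs, abs_abs, Real.abs_exp, abs_of_nonneg hC]
    rw [← add_mul, mul_assoc]
    gcongr
    rcases abs_cases q.2 with ⟨h, -⟩ | ⟨h, -⟩ <;> rw [h]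
    · linarith [Real.exp_pos (-K * q.2)]
    · rw [mul_neg, neg_mul]
      linarith [Real.exp_pos (K * q.2)]
  have hFm : ∀ τ, Measurable fun q : ℝ × ℝ => truncPayoff c B (τ - q.1) q.2 * w q := fun τ =>
    ((continuous_uncurry_truncPayoff hc.continuous hB.continuous).measurable.comp
      ((measurable_const.sub measurable_fst).prodMk measurable_snd)).mul hw
  have hDm : ∀ τ, Measurable fun q : ℝ × ℝ => truncPayoffDeriv c B (τ - q.1) q.2 * w q := fun τ =>
    ((measurable_uncurry_truncPayoffDeriv hc.continuous hB.continuous).comp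
      ((measurable_const.sub measurable_fst).prodMk measurable_snd)).mul hw
  have hFi : ∀ τ, Integrable (fun q : ℝ × ℝ => truncPayoff c B (τ - q.1) q.2 * w q) μ := by
    intro τ
    refine (hwint 0).mono (hFm τ).aestronglyMeasurable (Eventually.of_forall fun q => ?_)
    rw [zero_mul, Real.exp_zero, norm_mul, norm_mul, norm_one]
    refine mul_le_mul_of_nonneg_right ?_ (norm_nonneg _)
    rw [Real.norm_of_nonneg (truncPayoff_nonneg _ _ _ _)]
    exact truncPayoff_le_one _ _ _ _
  have hgood : ∀ τ, ∀ᵐ q ∂μ, τ - q.1 ≠ 0 ∧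
      (0 < τ - q.1 → c (τ - q.1) - B (τ - q.1) * q.2 ≠ 0) := by
    intro τ
    have hcc := hc.continuous
    have hBc := hB.continuous
    have hm : Measurable fun q : ℝ × ℝ => c (τ - q.1) - B (τ - q.1) * q.2 :=
      (by fun_prop : Continuous fun q : ℝ × ℝ => c (τ - q.1) - B (τ - q.1) * q.2).measurable
    have hm' : Measurable fun q : ℝ × ℝ => τ - q.1 := by fun_prop
    have hs : MeasurableSet {q : ℝ × ℝ | τ - q.1 ≠ 0 ∧
        (0 < τ - q.1 → c (τ - q.1) - B (τ - q.1) * q.2 ≠ 0)} := by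
      refine (hm' (measurableSet_singleton 0).compl).inter ?_
      exact (measurableSet_lt measurable_const hm').imp (hm (measurableSet_singleton 0).compl)
    rw [hμ, Measure.ae_prod_iff_ae_ae hs]
    refine ae_restrict_of_ae ?_
    filter_upwards [Measure.ae_ne volume τ] with u hu
    filter_upwards [Measure.ae_ne volume (c (τ - u) / B (τ - u))] with z hz
    refine ⟨sub_ne_zero.2 hu.symm, fun h h0 => hz ?_⟩
    rw [eq_div_iff (hBpos _ h).ne']
    linarith
  have hderiv : ∀ τ < T, HasDerivAt (fun τ => ∫ q, truncPayoff c B (τ - q.1) q.2 * w q ∂μ)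
      (∫ q, truncPayoffDeriv c B (τ - q.1) q.2 * w q ∂μ) τ := by
    intro τ hτ
    refine (hasDerivAt_integral_of_dominated_loc_of_lip (s := Set.Iio T)
      (bound := fun q : ℝ × ℝ => C * Real.exp (K * |q.2|) * |w q|) (Iio_mem_nhds hτ)
      (Eventually.of_forall fun τ => (hFm τ).aestronglyMeasurable) (hFi τ)
      (hDm τ).aestronglyMeasurable ?_ hbound ?_).2
    · filter_upwards [hpos] with q hq
      refine LipschitzOnWith.of_dist_le_mul fun x hx y hy => ?_
      rw [Set.mem_Iio] at hx hy
      have h0 : 0 ≤ C * Real.exp (K * |q.2|) * |w q| := by positivity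
      rw [Real.dist_eq, Real.dist_eq, Real.coe_nnabs, abs_of_nonneg h0, ← sub_mul, abs_mul]
      refine (mul_le_mul_of_nonneg_right (hlip q.2 _ _ (by linarith) (by linarith))
        (abs_nonneg _)).trans_eq ?_
      rw [sub_sub_sub_cancel_right]
      ring
    · filter_upwards [hgood τ] with q hq
      exact ((truncPayoff_hasDerivAt_and_continuousAt hc hB hc0 hB0 hq.1 hq.2).1.comp_sub_const
        τ q.1).mul_const (w q)
  have hcont : ∀ τ < T, ContinuousAt
      (fun τ => ∫ q, truncPayoffDeriv c B (τ - q.1) q.2 * w q ∂μ) τ := by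
    intro τ hτ
    refine continuousAt_of_dominated
      (bound := fun q : ℝ × ℝ => C * Real.exp (K * |q.2|) * |w q|)
      (Eventually.of_forall fun τ => (hDm τ).aestronglyMeasurable) ?_ hbound ?_
    · filter_upwards [Iio_mem_nhds hτ] with x hx
      rw [Set.mem_Iio] at hx
      filter_upwards [hpos] with q hq
      rw [norm_mul, Real.norm_eq_abs, Real.norm_eq_abs]
      gcongr
      exact hder q.2 _ (by linarith)
    · filter_upwards [hgood τ] with q hq
      have h := (truncPayoff_hasDerivAt_and_continuousAt hc hB hc0 hB0 hq.1 hq.2).2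
      have h' : ContinuousAt (fun τ : ℝ => τ - q.1) τ := by fun_prop
      exact (ContinuousAt.comp (f := fun τ : ℝ => τ - q.1)
        (g := fun s => truncPayoffDeriv c B s q.2) h h').mul continuousAt_const
  rw [contDiffAt_one_iff]
  refine ⟨fun τ => ContinuousLinearMap.toSpanSingleton ℝ
    (∫ q, truncPayoffDeriv c B (τ - q.1) q.2 * w q ∂μ), Set.Iio T, Iio_mem_nhds hτ₀, ?_,
    fun τ hτ => (hderiv τ hτ).hasFDerivAt⟩
  intro τ hτ
  exact ((ContinuousLinearMap.toSpanSingletonCLE (𝕜 := ℝ) (E := ℝ)).continuous.continuousAt.comp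
    (hcont τ hτ)).continuousWithinAt

lemma contDiff_bondSlope (a : ℝ) : ContDiff ℝ 1 (bondSlope a) := by
  unfold bondSlope
  fun_prop

lemma contDiff_bondIntercept (a δ b : ℝ) : ContDiff ℝ 1 (bondIntercept a δ b) := by
  unfold bondIntercept
  fun_prop

/-- The weight multiplying the payoff in `gammaFun`. -/
noncomputable def gammaWeight (a δ b r : ℝ) (q : ℝ × ℝ) : ℝ :=
  Real.exp (bondIntercept a δ b q.1 - bondSlope a q.1 * r) *
    gaussDensity (kernelVar a δ q.1) (q.2 - (r * Real.exp (-(a*q.1)) + kernelDrift a δ b q.1))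

lemma measurable_gammaWeight (a δ b r : ℝ) : Measurable (gammaWeight a δ b r) := by
  have h1 := continuous_bondSlope a
  have h2 := continuous_bondIntercept a δ b
  have h3 := continuous_kernelDrift a δ b
  have h4 := continuous_kernelVar a δ
  refine Measurable.mul ?_ (measurable_uncurry_gaussDensity.comp (Measurable.prodMk ?_ ?_))
  · exact (by fun_prop : Continuous fun q : ℝ × ℝ =>
      Real.exp (bondIntercept a δ b q.1 - bondSlope a q.1 * r)).measurable
  · exact h4.measurable.comp measurable_fst
  · exact (by fun_prop : Continuous fun q : ℝ × ℝ =>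
      q.2 - (r * Real.exp (-(a*q.1)) + kernelDrift a δ b q.1)).measurable

lemma integrable_exp_mul_gammaWeight {a δ : ℝ} (ha : 0 < a) (hδ : 0 < δ) (b r T K : ℝ) :
    Integrable (fun q : ℝ × ℝ => Real.exp (K * q.2) * gammaWeight a δ b r q)
      ((volume.restrict (Set.Ioc 0 T)).prod volume) := by
  have h1 := continuous_bondSlope a
  have h2 := continuous_bondIntercept a δ b
  have h3 := continuous_kernelDrift a δ b
  have h := integrable_mul_exp_mul_gaussDensity (T := T)
    (N := fun u => Real.exp (bondIntercept a δ b u - bondSlope a u * r))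
    (m := fun u => r * Real.exp (-(a*u)) + kernelDrift a δ b u) (v := kernelVar a δ)
    (by fun_prop) (by fun_prop) (continuous_kernelVar a δ)
    (fun u hu => kernelVar_pos ha hδ hu.1) K
  refine h.congr (Eventually.of_forall fun q => ?_)
  simp only [gammaWeight]
  ring

lemma bondSlope_zero (a : ℝ) : bondSlope a 0 = 0 := by simp [bondSlope]

lemma bondIntercept_zero (a δ b : ℝ) : bondIntercept a δ b 0 = 0 := by simp [bondIntercept]

/-- `gammaFun` as an integral over a domain that does not depend on `t`. -/
lemma gammaFun_eq_integral_prod {a δ b T t : ℝ} (ha : 0 < a) (hδ : 0 < δ) (ht0 : 0 < t)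
    (ht : t < T) (r : ℝ) :
    gammaFun a δ b T t r = ∫ q : ℝ × ℝ,
      truncPayoff (bondIntercept a δ b) (bondSlope a) (T - t - q.1) q.2 * gammaWeight a δ b r q
        ∂((volume.restrict (Set.Ioc 0 T)).prod volume) := by
  have hint : Integrable (fun q : ℝ × ℝ =>
      truncPayoff (bondIntercept a δ b) (bondSlope a) (T - t - q.1) q.2 * gammaWeight a δ b r q)
      ((volume.restrict (Set.Ioc 0 T)).prod volume) := by
    have h := integrable_exp_mul_gammaWeight ha hδ b r T 0
    simp only [zero_mul, Real.exp_zero, one_mul] at h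
    refine h.bdd_mul (c := 1) ?_ (Eventually.of_forall fun q => ?_)
    · exact ((continuous_uncurry_truncPayoff (continuous_bondIntercept a δ b)
        (continuous_bondSlope a)).comp (by fun_prop : Continuous fun q : ℝ × ℝ =>
          (T - t - q.1, q.2))).aestronglyMeasurable
    · rw [Real.norm_of_nonneg (truncPayoff_nonneg _ _ _ _)]
      exact truncPayoff_le_one _ _ _ _
  rw [integral_prod _ hint, gammaFun, intervalIntegral.integral_of_le (by linarith),
    setIntegral_eq_of_subset_of_forall_sdiff_eq_zero (s := Set.Ioo 0 (T - t)) (t := Set.Ioc 0 T)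
      measurableSet_Ioc (Set.Ioo_subset_Ioc_self.trans (Set.Ioc_subset_Ioc_right (by linarith))),
    integral_Ioc_eq_integral_Ioo]
  · refine setIntegral_congr_fun measurableSet_Ioo fun u hu => ?_
    have hs : 0 < T - t - u := by linarith [hu.2]
    have hB := bondSlope_pos ha hs
    have hA := bondSlope_mul_alphaCurve (a := a) (δ := δ) (b := b) (T := T) (t := u + t) ha
      (by linarith)
    rw [show T - (u + t) = T - t - u by ring] at hA
    simp only
    rw [← MeasureTheory.integral_indicator measurableSet_Ioi]
    congr 1
    funext z
    rw [Set.indicator_apply, M_eq_exp, M_eq_exp, phiKer_eq_gaussDensity,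
      show T - u - t = T - t - u by ring]
    split_ifs with hz
    · have hz' := mul_lt_mul_of_pos_left (Set.mem_Ioi.1 hz) hB
      rw [truncPayoff_of_pos_of_neg hs (by linarith), gammaWeight]
      ring
    · have hz' := mul_le_mul_of_nonneg_left (not_lt.1 (Set.mem_Ioi.not.1 hz)) hB.le
      rw [truncPayoff_of_pos_of_pos hs (by linarith), zero_mul]
  · intro u hu
    have hs : T - t - u ≤ 0 := by
      by_contra h
      exact hu.2 ⟨hu.1.1, by linarith⟩
    simp [truncPayoff_of_nonpos (bondIntercept_zero a δ b) (bondSlope_zero a) hs]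

lemma contDiffAt_one_gammaFun {a δ b T t : ℝ} (ha : 0 < a) (hδ : 0 < δ) (ht0 : 0 < t)
    (ht : t < T) (r : ℝ) : ContDiffAt ℝ 1 (fun t' => gammaFun a δ b T t' r) t := by
  have h := contDiffAt_integral_truncPayoff (contDiff_bondIntercept a δ b) (contDiff_bondSlope a)
    (bondIntercept_zero a δ b) (bondSlope_zero a) (fun s hs => bondSlope_pos ha hs)
    (T := T) (τ₀ := T - t) (by linarith) (by linarith) (measurable_gammaWeight a δ b r)
    (integrable_exp_mul_gammaWeight ha hδ b r T)
  have h' : ContDiffAt ℝ 1 (fun t' : ℝ => T - t') t := by fun_prop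
  refine (h.comp t h').congr_of_eventuallyEq ?_
  filter_upwards [Ioo_mem_nhds ht0 ht] with t' ht'
  exact gammaFun_eq_integral_prod ha hδ ht'.1 ht'.2 r

/-- `γ ∈ C^{1,2}((0,T) × ℝ)`: at every `(t,r) ∈ (0,T) × ℝ`, `γ` is
continuously differentiable in `t` and twice continuously differentiable in `r`. -/
theorem gamma_C12 (a δ b T : ℝ) (ha : 0 < a) (hδ : 0 < δ) (hT : 0 < T) :
    ∀ t : ℝ, 0 < t → t < T → ∀ r : ℝ,
      ContDiffAt ℝ 1 (fun t' => gammaFun a δ b T t' r) t ∧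
      ContDiffAt ℝ 2 (fun r' => gammaFun a δ b T t r') r := by
  intro t ht0 ht r
  exact ⟨contDiffAt_one_gammaFun ha hδ ht0 ht r, (contDiff_two_gammaFun ha hδ ht).contDiffAt⟩
end

section
/- For every (t,r) ∈ (0,T) × ℝ, the function γ satisfies the partial differential equation ∂_t γ(t,r) + a(b−r)·∂_r γ(t,r) + (δ²/2)·∂_{rr} γ(t,r) − r·γ(t,r) + 1_{{r > α(t)}}·(1 − M(T−t, r)) = 0. -/
open Real Filter MeasureTheory intervalIntegral

/-! ### The standard normal density and distribution function -/

/-- The standard normal density. -/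
noncomputable def stdNormalPDF (x : ℝ) : ℝ := (√(2 * Real.pi))⁻¹ * Real.exp (-x ^ 2 / 2)

/-- The standard normal cumulative distribution function. -/
noncomputable def stdNormalCDF (x : ℝ) : ℝ :=
  ProbabilityTheory.cdf (ProbabilityTheory.gaussianReal 0 1) x

lemma stdNormalPDF_eq_gaussianPDFReal (x : ℝ) :
    stdNormalPDF x = ProbabilityTheory.gaussianPDFReal 0 1 x := by
  simp [stdNormalPDF, ProbabilityTheory.gaussianPDFReal]

@[fun_prop]
lemma continuous_stdNormalPDF : Continuous stdNormalPDF := by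
  unfold stdNormalPDF
  fun_prop

lemma stdNormalPDF_nonneg (x : ℝ) : 0 ≤ stdNormalPDF x := by
  unfold stdNormalPDF
  positivity

lemma stdNormalPDF_le_one (x : ℝ) : stdNormalPDF x ≤ 1 := by
  unfold stdNormalPDF
  have h1 : (√(2 * Real.pi))⁻¹ ≤ 1 := by
    apply inv_le_one_of_one_le₀
    rw [Real.one_le_sqrt]
    nlinarith [Real.pi_gt_three]
  have h2 : Real.exp (-x ^ 2 / 2) ≤ 1 := Real.exp_le_one_iff.2 (by nlinarith [sq_nonneg x])
  exact mul_le_one₀ h1 (Real.exp_pos _).le h2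

lemma stdNormalCDF_nonneg (x : ℝ) : 0 ≤ stdNormalCDF x := ProbabilityTheory.cdf_nonneg _ _

lemma stdNormalCDF_le_one (x : ℝ) : stdNormalCDF x ≤ 1 := ProbabilityTheory.cdf_le_one _ _

lemma stdNormalCDF_eq_integral (x : ℝ) :
    stdNormalCDF x = ∫ y in Set.Iic x, stdNormalPDF y := by
  rw [stdNormalCDF, ProbabilityTheory.cdf_eq_real, Measure.real,
    ProbabilityTheory.gaussianReal_apply_eq_integral _ one_ne_zero, ENNReal.toReal_ofReal]
  · simp only [stdNormalPDF_eq_gaussianPDFReal]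
  · exact integral_nonneg fun y => ProbabilityTheory.gaussianPDFReal_nonneg _ _ _

lemma hasDerivAt_stdNormalCDF (x : ℝ) : HasDerivAt stdNormalCDF (stdNormalPDF x) x := by
  have hint : Integrable stdNormalPDF := by
    have := ProbabilityTheory.integrable_gaussianPDFReal 0 1
    rwa [← funext stdNormalPDF_eq_gaussianPDFReal] at this
  have hcdf : stdNormalCDF = fun x => stdNormalCDF 0 + ∫ y in (0 : ℝ)..x, stdNormalPDF y := by
    ext x
    rw [← intervalIntegral.integral_Iic_sub_Iic hint.integrableOn hint.integrableOn,
      ← stdNormalCDF_eq_integral, ← stdNormalCDF_eq_integral]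
    ring
  rw [hcdf]
  exact (intervalIntegral.integral_hasDerivAt_right hint.intervalIntegrable
    (continuous_stdNormalPDF.stronglyMeasurableAtFilter _ _)
    continuous_stdNormalPDF.continuousAt).const_add _

@[fun_prop]
lemma continuous_stdNormalCDF : Continuous stdNormalCDF :=
  continuous_iff_continuousAt.2 fun x => (hasDerivAt_stdNormalCDF x).continuousAt

lemma abs_stdNormalCDF_sub_le (x y : ℝ) : |stdNormalCDF x - stdNormalCDF y| ≤ |x - y| := by
  have := Convex.norm_image_sub_le_of_norm_hasDerivWithin_le (f := stdNormalCDF)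
    (s := Set.univ) (C := 1) (x := y) (y := x)
    (fun x _ => (hasDerivAt_stdNormalCDF x).hasDerivWithinAt)
    (fun x _ => by
      rw [Real.norm_eq_abs, abs_of_nonneg (stdNormalPDF_nonneg x)]
      exact stdNormalPDF_le_one x) convex_univ trivial trivial
  simpa using this

/-- The derivative of an expression of Black–Scholes type `P N(d) - Q N(d - e)`. -/
lemma hasDerivAt_mul_cdf_sub {P Q d e : ℝ → ℝ} {P' Q' d' e' x : ℝ}
    (hP : HasDerivAt P P' x) (hQ : HasDerivAt Q Q' x) (hd : HasDerivAt d d' x)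
    (he : HasDerivAt e e' x) :
    HasDerivAt (fun x => P x * stdNormalCDF (d x) - Q x * stdNormalCDF (d x - e x))
      (P' * stdNormalCDF (d x) - Q' * stdNormalCDF (d x - e x)
        + (P x * stdNormalPDF (d x) - Q x * stdNormalPDF (d x - e x)) * d'
        + Q x * stdNormalPDF (d x - e x) * e') x := by
  have h1 := hP.mul ((hasDerivAt_stdNormalCDF (d x)).comp x hd)
  have h2 := hQ.mul ((hasDerivAt_stdNormalCDF (d x - e x)).comp x (hd.sub he))
  refine (h1.sub h2).congr_deriv ?_
  simp only [Function.comp_apply, Pi.sub_apply]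
  ring

/-! ### The Vasicek bond price -/

/-- The duration `(1 - e^{-au}) / a` of the bond price. -/
noncomputable def bondDuration (a u : ℝ) : ℝ := (1 - Real.exp (-(a * u))) / a

/-- The logarithmic derivative of the bond price `M` with respect to the time to maturity. -/
noncomputable def bondRate (a δ b u r : ℝ) : ℝ :=
  -(b - δ ^ 2 / (2 * a ^ 2)) + ((b - δ ^ 2 / (2 * a ^ 2)) - r) * Real.exp (-(a * u))
    - δ ^ 2 / (2 * a ^ 2) * ((1 - Real.exp (-(a * u))) * Real.exp (-(a * u)))

/-- The standard deviation of the Gaussian kernel `phiKer`. -/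
noncomputable def shortRateStd (a δ u : ℝ) : ℝ :=
  √(δ ^ 2 / (2 * a) * (1 - Real.exp (-(2 * a * u))))

/-- The mean of the Gaussian kernel `phiKer`. -/
noncomputable def shortRateMean (a δ b u r : ℝ) : ℝ :=
  r * Real.exp (-(a * u)) + b * (1 - Real.exp (-(a * u)))
    - δ ^ 2 / (2 * a ^ 2) * (1 - Real.exp (-(a * u))) ^ 2

lemma exp_neg_two_mul (a u : ℝ) :
    Real.exp (-(2 * a * u)) = Real.exp (-(a * u)) ^ 2 := by
  rw [← Real.exp_nat_mul]
  congr 1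
  push_cast
  ring

lemma M_pos (a δ b u r : ℝ) : 0 < M a δ b u r := Real.exp_pos _

@[fun_prop]
lemma continuous_M (a δ b r : ℝ) : Continuous fun u => M a δ b u r := by
  unfold M
  fun_prop

@[fun_prop]
lemma continuous_bondRate (a δ b r : ℝ) : Continuous fun u => bondRate a δ b u r := by
  unfold bondRate
  fun_prop

@[fun_prop]
lemma continuous_bondDuration (a : ℝ) : Continuous (bondDuration a) := by
  unfold bondDuration
  fun_prop

@[fun_prop]
lemma continuous_shortRateStd (a δ : ℝ) : Continuous (shortRateStd a δ) := by
  unfold shortRateStd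
  fun_prop

@[fun_prop]
lemma continuous_shortRateMean (a δ b r : ℝ) : Continuous fun u => shortRateMean a δ b u r := by
  unfold shortRateMean
  fun_prop

lemma M_zero (a δ b r : ℝ) : M a δ b 0 r = 1 := by simp [M]

lemma bondDuration_zero (a : ℝ) : bondDuration a 0 = 0 := by simp [bondDuration]

lemma shortRateStd_zero (a δ : ℝ) : shortRateStd a δ 0 = 0 := by simp [shortRateStd]

lemma shortRateMean_zero (a δ b r : ℝ) : shortRateMean a δ b 0 r = r := by simp [shortRateMean]

section

variable {a δ : ℝ}

lemma exp_neg_mul_lt_one {u : ℝ} (ha : 0 < a) (hu : 0 < u) : Real.exp (-(a * u)) < 1 :=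
  Real.exp_lt_one_iff.2 (by nlinarith)

lemma exp_neg_mul_le_one {u : ℝ} (ha : 0 < a) (hu : 0 ≤ u) : Real.exp (-(a * u)) ≤ 1 :=
  Real.exp_le_one_iff.2 (by nlinarith)

lemma bondDuration_nonneg {u : ℝ} (ha : 0 < a) (hu : 0 ≤ u) : 0 ≤ bondDuration a u :=
  div_nonneg (sub_nonneg.2 (exp_neg_mul_le_one ha hu)) ha.le

lemma bondDuration_le (ha : 0 < a) (u : ℝ) : bondDuration a u ≤ a⁻¹ := by
  rw [bondDuration, div_le_iff₀ ha, inv_mul_cancel₀ ha.ne']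
  linarith [Real.exp_pos (-(a * u))]

lemma bondDuration_add (ha : 0 < a) (u v : ℝ) :
    bondDuration a (u + v) - bondDuration a u = Real.exp (-(a * u)) * bondDuration a v := by
  unfold bondDuration
  rw [show -(a * (u + v)) = -(a * u) + -(a * v) by ring, Real.exp_add]
  field_simp
  ring

lemma shortRateStd_pos {u : ℝ} (ha : 0 < a) (hδ : 0 < δ) (hu : 0 < u) :
    0 < shortRateStd a δ u := by
  have : Real.exp (-(2 * a * u)) < 1 := Real.exp_lt_one_iff.2 (by nlinarith [mul_pos ha hu])
  exact Real.sqrt_pos.2 (mul_pos (by positivity) (by linarith))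

lemma shortRateStd_nonneg (a δ u : ℝ) : 0 ≤ shortRateStd a δ u := Real.sqrt_nonneg _

lemma shortRateStd_sq {u : ℝ} (ha : 0 < a) (hu : 0 ≤ u) :
    shortRateStd a δ u ^ 2 = δ ^ 2 / (2 * a) * (1 - Real.exp (-(a * u)) ^ 2) := by
  have : Real.exp (-(2 * a * u)) ≤ 1 := Real.exp_le_one_iff.2 (by nlinarith [mul_nonneg ha.le hu])
  rw [shortRateStd, Real.sq_sqrt (mul_nonneg (by positivity) (by linarith)), exp_neg_two_mul]

lemma hasDerivAt_exp_neg_mul (a u : ℝ) :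
    HasDerivAt (fun u => Real.exp (-(a * u))) (-a * Real.exp (-(a * u))) u := by
  have := ((hasDerivAt_id u).const_mul a).neg.exp
  refine this.congr_deriv ?_
  simp
  ring

lemma hasDerivAt_bondDuration (ha : 0 < a) (u : ℝ) :
    HasDerivAt (bondDuration a) (Real.exp (-(a * u))) u := by
  refine (((hasDerivAt_exp_neg_mul a u).const_sub 1).div_const a).congr_deriv ?_
  field_simp

lemma hasDerivAt_shortRateStd {u : ℝ} (ha : 0 < a) (hδ : 0 < δ) (hu : 0 < u) :
    HasDerivAt (shortRateStd a δ)
      (δ ^ 2 * Real.exp (-(a * u)) ^ 2 / (2 * shortRateStd a δ u)) u := by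
  have h0 : δ ^ 2 / (2 * a) * (1 - Real.exp (-(2 * a * u))) ≠ 0 :=
    (Real.sqrt_pos.1 (shortRateStd_pos ha hδ hu)).ne'
  refine ((((hasDerivAt_exp_neg_mul (2 * a) u).const_sub 1).const_mul _).sqrt h0).congr_deriv ?_
  rw [exp_neg_two_mul, shortRateStd, exp_neg_two_mul]
  field_simp

lemma hasDerivAt_M_rate (a δ b u r : ℝ) :
    HasDerivAt (fun r => M a δ b u r) (-bondDuration a u * M a δ b u r) r := by
  unfold M bondDuration
  have h := (((((hasDerivAt_id r).const_sub (b - δ ^ 2 / (2 * a ^ 2))).div_const a).mul_const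
    (1 - Real.exp (-(a * u)))).const_add (-(b - δ ^ 2 / (2 * a ^ 2)) * u)).sub_const
    (δ ^ 2 / (4 * a ^ 3) * (1 - Real.exp (-(a * u))) ^ 2)
  refine h.exp.congr_deriv ?_
  simp only [id]
  ring

lemma hasDerivAt_M_maturity (ha : 0 < a) (δ b u r : ℝ) :
    HasDerivAt (fun u => M a δ b u r) (bondRate a δ b u r * M a δ b u r) u := by
  unfold M bondRate
  have hE := (hasDerivAt_exp_neg_mul a u).const_sub 1
  have h := (((hasDerivAt_id u).const_mul (-(b - δ ^ 2 / (2 * a ^ 2)))).add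
    (hE.const_mul (((b - δ ^ 2 / (2 * a ^ 2)) - r) / a))).sub
    ((hE.pow 2).const_mul (δ ^ 2 / (4 * a ^ 3)))
  refine h.exp.congr_deriv ?_
  simp only [Pi.add_apply, Pi.sub_apply, Pi.pow_apply, id]
  rw [mul_comm]
  congr 1
  push_cast
  field_simp
  ring

/-- The Vasicek term structure equation for the bond price. -/
lemma bondRate_eq (ha : 0 < a) (δ b u r : ℝ) :
    bondRate a δ b u r = -(a * (b - r) * bondDuration a u)
      + δ ^ 2 / 2 * bondDuration a u ^ 2 - r := by
  unfold bondRate bondDuration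
  field_simp
  ring

lemma M_anti_rate (ha : 0 < a) (δ b : ℝ) {u r r' : ℝ} (hu : 0 ≤ u) (h : r ≤ r') :
    M a δ b u r' ≤ M a δ b u r := by
  unfold M
  have := exp_neg_mul_le_one ha hu
  gcongr

/-- Completing the square: the discounted payoff of the bond against the Gaussian density. -/
lemma M_mul_stdNormalPDF (ha : 0 < a) (hδ : 0 < δ) (b : ℝ) {u : ℝ} (hu : 0 < u) (v r z : ℝ) :
    M a δ b u r * M a δ b v z
        * stdNormalPDF ((shortRateMean a δ b u r - z) / shortRateStd a δ u) =
      M a δ b (u + v) r * stdNormalPDF ((shortRateMean a δ b u r - z) / shortRateStd a δ u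
        - shortRateStd a δ u * bondDuration a v) := by
  have hS := shortRateStd_pos ha hδ hu
  have hsq := shortRateStd_sq (δ := δ) ha hu.le
  unfold stdNormalPDF M
  have key : ∀ p q x y c : ℝ, p + q + x = y + c →
      Real.exp p * Real.exp q * ((√(2 * Real.pi))⁻¹ * Real.exp x)
        = Real.exp y * ((√(2 * Real.pi))⁻¹ * Real.exp c) := by
    intro p q x y c h
    calc _ = (√(2 * Real.pi))⁻¹ * (Real.exp p * Real.exp q * Real.exp x) := by ring
      _ = (√(2 * Real.pi))⁻¹ * (Real.exp y * Real.exp c) := by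
        rw [← Real.exp_add, ← Real.exp_add, h, Real.exp_add]
      _ = _ := by ring
  apply key
  have e1 : ((shortRateMean a δ b u r - z) / shortRateStd a δ u
      - shortRateStd a δ u * bondDuration a v) ^ 2
      = ((shortRateMean a δ b u r - z) / shortRateStd a δ u) ^ 2
        - 2 * (shortRateMean a δ b u r - z) * bondDuration a v
        + shortRateStd a δ u ^ 2 * bondDuration a v ^ 2 := by
    field_simp
    ring
  rw [e1, hsq, show -(a * (u + v)) = -(a * u) + -(a * v) by ring, Real.exp_add]
  unfold bondDuration shortRateMean
  generalize Real.exp (-(a * u)) = x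
  generalize Real.exp (-(a * v)) = y
  generalize ((r * x + b * (1 - x) - δ ^ 2 / (2 * a ^ 2) * (1 - x) ^ 2 - z)
    / shortRateStd a δ u) ^ 2 = w
  field_simp
  ring

end

/-! ### The separating curve and the inner integral -/

section

variable {a δ T : ℝ}

/-- Along the separating curve the bond trades at par. -/
lemma M_alphaCurve (ha : 0 < a) (δ b : ℝ) {s : ℝ} (hs : s < T) :
    M a δ b (T - s) (alphaCurve a δ b T s) = 1 := by
  have hE := (sub_pos.2 (exp_neg_mul_lt_one ha (sub_pos.2 hs))).ne'
  unfold M alphaCurve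
  rw [Real.exp_eq_one_iff]
  generalize hx : 1 - Real.exp (-(a * (T - s))) = x at *
  field_simp
  ring

lemma differentiableAt_alphaCurve (ha : 0 < a) (δ b : ℝ) {s : ℝ} (hs : s < T) :
    DifferentiableAt ℝ (alphaCurve a δ b T) s := by
  have hE := (sub_pos.2 (exp_neg_mul_lt_one ha (sub_pos.2 hs))).ne'
  unfold alphaCurve
  fun_prop (disch := assumption)

lemma phiKer_eq (ha : 0 < a) (hδ : 0 < δ) (b : ℝ) {u : ℝ} (hu : 0 < u) (z r : ℝ) :
    phiKer a δ b z u r =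
      stdNormalPDF ((shortRateMean a δ b u r - z) / shortRateStd a δ u) / shortRateStd a δ u := by
  have hS := shortRateStd_pos ha hδ hu
  have hsq := shortRateStd_sq (δ := δ) ha hu.le
  unfold phiKer stdNormalPDF
  have h1 : √(2 * Real.pi * (δ ^ 2 / (2 * a)) * (1 - Real.exp (-(2 * a * u))))
      = √(2 * Real.pi) * shortRateStd a δ u := by
    rw [mul_assoc, Real.sqrt_mul (by positivity), shortRateStd]
  have h2 : 2 * (δ ^ 2 / (2 * a)) * (1 - Real.exp (-(2 * a * u)))
      = 2 * shortRateStd a δ u ^ 2 := by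
    rw [hsq, exp_neg_two_mul, mul_assoc]
  rw [h1, h2, mul_inv]
  have h3 : -(z - r * Real.exp (-(a * u)) - b * (1 - Real.exp (-(a * u)))
      + δ ^ 2 / (2 * a ^ 2) * (1 - Real.exp (-(a * u))) ^ 2) ^ 2 / (2 * shortRateStd a δ u ^ 2)
      = -((shortRateMean a δ b u r - z) / shortRateStd a δ u) ^ 2 / 2 := by
    unfold shortRateMean
    field_simp
    ring
  rw [h3]
  ring

/-- The standardized distance of the mean short rate to the separating curve. -/
noncomputable def alphaScore (a δ b T u t r : ℝ) : ℝ :=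
  (shortRateMean a δ b u r - alphaCurve a δ b T (u + t)) / shortRateStd a δ u

/-- The closed form of the inner integral in `gammaFun`. -/
noncomputable def putValue (a δ b T u t r : ℝ) : ℝ :=
  M a δ b u r * stdNormalCDF (alphaScore a δ b T u t r)
    - M a δ b (T - t) r * stdNormalCDF (alphaScore a δ b T u t r
      - shortRateStd a δ u * bondDuration a (T - t - u))

lemma M_mul_stdNormalPDF_alphaScore (ha : 0 < a) (hδ : 0 < δ) (b : ℝ) {u t : ℝ}
    (hu : 0 < u) (hut : u < T - t) (r : ℝ) :
    M a δ b u r * stdNormalPDF (alphaScore a δ b T u t r) =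
      M a δ b (T - t) r * stdNormalPDF (alphaScore a δ b T u t r
        - shortRateStd a δ u * bondDuration a (T - t - u)) := by
  have h := M_mul_stdNormalPDF ha hδ b hu (T - t - u) r (alphaCurve a δ b T (u + t))
  rwa [show T - t - u = T - (u + t) by ring, M_alphaCurve ha δ b (by linarith), mul_one,
    show u + (T - (u + t)) = T - t by ring, show T - (u + t) = T - t - u by ring] at h

lemma integral_eq_putValue (ha : 0 < a) (hδ : 0 < δ) (b : ℝ) {u t : ℝ}
    (hu : 0 < u) (hut : u < T - t) (r : ℝ) :
    ∫ z in Set.Ioi (alphaCurve a δ b T (u + t)),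
      M a δ b u r * (1 - M a δ b (T - u - t) z) * phiKer a δ b z u r
      = putValue a δ b T u t r := by
  have hS := shortRateStd_pos ha hδ hu
  set S := shortRateStd a δ u with hS_def
  set m := shortRateMean a δ b u r with hm
  have hd : ∀ z, HasDerivAt (fun z => (m - z) / S) (-1 / S) z := fun z =>
    ((hasDerivAt_id z).const_sub m).div_const S
  have hderiv : ∀ z, HasDerivAt (fun z => -M a δ b u r * stdNormalCDF ((m - z) / S)
      - -M a δ b (T - t) r * stdNormalCDF ((m - z) / S - S * bondDuration a (T - t - u)))
      (M a δ b u r * (1 - M a δ b (T - u - t) z) * phiKer a δ b z u r) z := by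
    intro z
    refine (hasDerivAt_mul_cdf_sub (hasDerivAt_const z (-M a δ b u r))
      (hasDerivAt_const z (-M a δ b (T - t) r)) (hd z)
      (hasDerivAt_const z (S * bondDuration a (T - t - u)))).congr_deriv ?_
    have h := M_mul_stdNormalPDF ha hδ b hu (T - t - u) r z
    rw [← hS_def, ← hm, show u + (T - t - u) = T - t by ring] at h
    rw [phiKer_eq ha hδ b hu, ← hS_def, ← hm, show T - u - t = T - t - u by ring]
    rw [neg_mul (M a δ b (T - t) r), ← h]
    field_simp
    ring
  have hpos : ∀ z ∈ Set.Ioi (alphaCurve a δ b T (u + t)),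
      0 ≤ M a δ b u r * (1 - M a δ b (T - u - t) z) * phiKer a δ b z u r := by
    intro z hz
    have h1 : M a δ b (T - u - t) z ≤ 1 := by
      rw [← M_alphaCurve (T := T) (s := u + t) ha δ b (by linarith), ← sub_sub]
      exact M_anti_rate ha δ b (by linarith) (le_of_lt hz)
    rw [phiKer_eq ha hδ b hu]
    exact mul_nonneg (mul_nonneg (M_pos _ _ _ _ _).le (sub_nonneg.2 h1))
      (div_nonneg (stdNormalPDF_nonneg _) hS.le)
  have hlim : Tendsto (fun z => (m - z) / S) atTop atBot :=
    (tendsto_atBot_add_const_left _ m tendsto_neg_atTop_atBot).atBot_div_const hS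
  have hN : Tendsto stdNormalCDF atBot (nhds 0) := ProbabilityTheory.tendsto_cdf_atBot _
  have htend := ((hN.comp hlim).const_mul (-M a δ b u r)).sub
    ((hN.comp (tendsto_atBot_add_const_right _ (-(S * bondDuration a (T - t - u)))
      hlim)).const_mul (-M a δ b (T - t) r))
  rw [integral_Ioi_of_hasDerivAt_of_nonneg' (fun z _ => hderiv z) hpos htend]
  simp only [putValue, alphaScore]
  ring

lemma gammaFun_eq (ha : 0 < a) (hδ : 0 < δ) (b : ℝ) {t : ℝ} (ht : t < T) (r : ℝ) :
    gammaFun a δ b T t r = ∫ u in Set.Ioo 0 (T - t), putValue a δ b T u t r := by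
  rw [gammaFun, intervalIntegral.integral_of_le (by linarith), integral_Ioc_eq_integral_Ioo]
  exact setIntegral_congr_fun measurableSet_Ioo fun u hu =>
    integral_eq_putValue ha hδ b hu.1 hu.2 r

/-! ### Derivatives of the inner integral -/

/-- The derivative of `putValue` in the short rate. -/
noncomputable def putDelta (a δ b T u t r : ℝ) : ℝ :=
  -bondDuration a u * M a δ b u r * stdNormalCDF (alphaScore a δ b T u t r)
    - -bondDuration a (T - t) * M a δ b (T - t) r * stdNormalCDF (alphaScore a δ b T u t r
      - shortRateStd a δ u * bondDuration a (T - t - u))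

/-- The second derivative of `putValue` in the short rate. -/
noncomputable def putGamma (a δ b T u t r : ℝ) : ℝ :=
  bondDuration a u ^ 2 * M a δ b u r * stdNormalCDF (alphaScore a δ b T u t r)
    - bondDuration a (T - t) ^ 2 * M a δ b (T - t) r * stdNormalCDF (alphaScore a δ b T u t r
      - shortRateStd a δ u * bondDuration a (T - t - u))
    + M a δ b (T - t) r * stdNormalPDF (alphaScore a δ b T u t r
      - shortRateStd a δ u * bondDuration a (T - t - u)) * bondDuration a (T - t - u)
      * (Real.exp (-(a * u)) ^ 2 / shortRateStd a δ u)

/-- The derivative of `putValue` in `t`. -/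
noncomputable def putTheta (a δ b T u t r : ℝ) : ℝ :=
  bondRate a δ b (T - t) r * M a δ b (T - t) r * stdNormalCDF (alphaScore a δ b T u t r
      - shortRateStd a δ u * bondDuration a (T - t - u))
    - M a δ b (T - t) r * stdNormalPDF (alphaScore a δ b T u t r
      - shortRateStd a δ u * bondDuration a (T - t - u))
      * (shortRateStd a δ u * Real.exp (-(a * (T - t - u))))

lemma hasDerivAt_alphaScore_rate (a δ b T u t r : ℝ) :
    HasDerivAt (fun r => alphaScore a δ b T u t r)
      (Real.exp (-(a * u)) / shortRateStd a δ u) r := by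
  unfold alphaScore shortRateMean
  simpa using (((((hasDerivAt_id r).mul_const (Real.exp (-(a * u)))).add_const
    (b * (1 - Real.exp (-(a * u))))).sub_const
    (δ ^ 2 / (2 * a ^ 2) * (1 - Real.exp (-(a * u))) ^ 2)).sub_const
    (alphaCurve a δ b T (u + t))).div_const (shortRateStd a δ u)

lemma differentiableAt_alphaScore_time (ha : 0 < a) (δ b : ℝ) {u t : ℝ} (hut : u < T - t)
    (r : ℝ) : DifferentiableAt ℝ (fun t => alphaScore a δ b T u t r) t := by
  have h : DifferentiableAt ℝ (fun t => alphaCurve a δ b T (u + t)) t :=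
    (differentiableAt_alphaCurve ha δ b (by linarith)).comp t (by fun_prop)
  exact (h.const_sub _).div_const _

lemma differentiableAt_alphaScore_maturity (ha : 0 < a) (hδ : 0 < δ) (b : ℝ) {u t : ℝ}
    (hu : 0 < u) (hut : u < T - t) (r : ℝ) :
    DifferentiableAt ℝ (fun u => alphaScore a δ b T u t r) u := by
  have h : DifferentiableAt ℝ (fun u => alphaCurve a δ b T (u + t)) u :=
    (differentiableAt_alphaCurve ha δ b (by linarith)).comp u (by fun_prop)
  have hm : DifferentiableAt ℝ (fun u => shortRateMean a δ b u r) u := by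
    unfold shortRateMean
    fun_prop
  exact (hm.sub h).div (hasDerivAt_shortRateStd ha hδ hu).differentiableAt
    (shortRateStd_pos ha hδ hu).ne'

lemma hasDerivAt_putValue_rate (ha : 0 < a) (hδ : 0 < δ) (b : ℝ) {u t : ℝ}
    (hu : 0 < u) (hut : u < T - t) (r : ℝ) :
    HasDerivAt (fun r => putValue a δ b T u t r) (putDelta a δ b T u t r) r := by
  refine (hasDerivAt_mul_cdf_sub (hasDerivAt_M_rate a δ b u r)
    (hasDerivAt_M_rate a δ b (T - t) r) (hasDerivAt_alphaScore_rate a δ b T u t r)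
    (hasDerivAt_const r _)).congr_deriv ?_
  rw [M_mul_stdNormalPDF_alphaScore ha hδ b hu hut, putDelta]
  ring

lemma hasDerivAt_putDelta_rate (ha : 0 < a) (hδ : 0 < δ) (b : ℝ) {u t : ℝ}
    (hu : 0 < u) (hut : u < T - t) (r : ℝ) :
    HasDerivAt (fun r => putDelta a δ b T u t r) (putGamma a δ b T u t r) r := by
  refine (hasDerivAt_mul_cdf_sub ((hasDerivAt_M_rate a δ b u r).const_mul (-bondDuration a u))
    ((hasDerivAt_M_rate a δ b (T - t) r).const_mul (-bondDuration a (T - t)))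
    (hasDerivAt_alphaScore_rate a δ b T u t r) (hasDerivAt_const r _)).congr_deriv ?_
  have hB := bondDuration_add ha u (T - t - u)
  rw [show u + (T - t - u) = T - t by ring] at hB
  rw [mul_assoc (-bondDuration a u) _ (stdNormalPDF _),
    M_mul_stdNormalPDF_alphaScore ha hδ b hu hut, putGamma]
  linear_combination M a δ b (T - t) r * stdNormalPDF (alphaScore a δ b T u t r
      - shortRateStd a δ u * bondDuration a (T - t - u))
      * (Real.exp (-(a * u)) / shortRateStd a δ u) * hB

lemma hasDerivAt_putValue_time (ha : 0 < a) (hδ : 0 < δ) (b : ℝ) {u t : ℝ}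
    (hu : 0 < u) (hut : u < T - t) (r : ℝ) :
    HasDerivAt (fun t => putValue a δ b T u t r) (putTheta a δ b T u t r) t := by
  have hτ : HasDerivAt (fun t => T - t) (-1) t := (hasDerivAt_id t).const_sub T
  have hM := (hasDerivAt_M_maturity ha δ b (T - t) r).comp t hτ
  have hB := ((hasDerivAt_bondDuration ha (T - t - u)).comp t (hτ.sub_const u)).const_mul
    (shortRateStd a δ u)
  refine (hasDerivAt_mul_cdf_sub (hasDerivAt_const t (M a δ b u r)) hM
    (differentiableAt_alphaScore_time ha δ b hut r).hasDerivAt hB).congr_deriv ?_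
  simp only [Function.comp_apply]
  rw [M_mul_stdNormalPDF_alphaScore ha hδ b hu hut, putTheta]
  ring

/-- The pricing equation for the inner integral, solved for the derivative in `u`. -/
lemma hasDerivAt_putValue_maturity (ha : 0 < a) (hδ : 0 < δ) (b : ℝ) {u t : ℝ}
    (hu : 0 < u) (hut : u < T - t) (r : ℝ) :
    HasDerivAt (fun u => putValue a δ b T u t r)
      (putTheta a δ b T u t r + a * (b - r) * putDelta a δ b T u t r
        + δ ^ 2 / 2 * putGamma a δ b T u t r - r * putValue a δ b T u t r) u := by
  have hτ : HasDerivAt (fun u => T - t - u) (-1) u := (hasDerivAt_id u).const_sub (T - t)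
  have hB := (hasDerivAt_shortRateStd ha hδ hu).mul
    ((hasDerivAt_bondDuration ha (T - t - u)).comp u hτ)
  refine (hasDerivAt_mul_cdf_sub (hasDerivAt_M_maturity ha δ b u r)
    (hasDerivAt_const u (M a δ b (T - t) r))
    (differentiableAt_alphaScore_maturity ha hδ b hu hut r).hasDerivAt hB).congr_deriv ?_
  simp only [Function.comp_apply, Pi.mul_apply]
  rw [M_mul_stdNormalPDF_alphaScore ha hδ b hu hut, putTheta, putDelta, putGamma, putValue,
    bondRate_eq ha, bondRate_eq ha]
  have hS := (shortRateStd_pos ha hδ hu).ne'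
  field_simp
  ring

end

/-! ### Differentiation under the integral sign -/

lemma ContinuousOn.integrableOn_Ioo_of_abs_le {f g : ℝ → ℝ} {c : ℝ}
    (hf : ContinuousOn f (Set.Ioo 0 c)) (hg : IntegrableOn g (Set.Ioo 0 c))
    (hfg : ∀ u ∈ Set.Ioo 0 c, |f u| ≤ g u) : IntegrableOn f (Set.Ioo 0 c) :=
  Integrable.mono' hg (hf.aestronglyMeasurable measurableSet_Ioo)
    (ae_restrict_of_forall_mem measurableSet_Ioo hfg)

lemma Continuous.integrableOn_Ioo' {g : ℝ → ℝ} (hg : Continuous g) (c d : ℝ) :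
    IntegrableOn g (Set.Ioo c d) :=
  (hg.continuousOn.integrableOn_Icc).mono_set Set.Ioo_subset_Icc_self

section

variable {a δ T : ℝ}

lemma continuousOn_alphaScore (ha : 0 < a) (hδ : 0 < δ) (b t r : ℝ) :
    ContinuousOn (fun u => alphaScore a δ b T u t r) (Set.Ioo 0 (T - t)) := fun _ hu =>
  (differentiableAt_alphaScore_maturity ha hδ b hu.1 hu.2 r).continuousAt.continuousWithinAt

lemma continuousOn_putValue (ha : 0 < a) (hδ : 0 < δ) (b t r : ℝ) :
    ContinuousOn (fun u => putValue a δ b T u t r) (Set.Ioo 0 (T - t)) := by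
  have h := continuousOn_alphaScore (T := T) ha hδ b t r
  unfold putValue
  fun_prop

lemma continuousOn_putDelta (ha : 0 < a) (hδ : 0 < δ) (b t r : ℝ) :
    ContinuousOn (fun u => putDelta a δ b T u t r) (Set.Ioo 0 (T - t)) := by
  have h := continuousOn_alphaScore (T := T) ha hδ b t r
  unfold putDelta
  fun_prop

lemma continuousOn_putGamma (ha : 0 < a) (hδ : 0 < δ) (b t r : ℝ) :
    ContinuousOn (fun u => putGamma a δ b T u t r) (Set.Ioo 0 (T - t)) := by
  have h := continuousOn_alphaScore (T := T) ha hδ b t r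
  have hS : ∀ u ∈ Set.Ioo 0 (T - t), shortRateStd a δ u ≠ 0 := fun u hu =>
    (shortRateStd_pos ha hδ hu.1).ne'
  unfold putGamma
  fun_prop (disch := assumption)

lemma continuousOn_putTheta (ha : 0 < a) (hδ : 0 < δ) (b t r : ℝ) :
    ContinuousOn (fun u => putTheta a δ b T u t r) (Set.Ioo 0 (T - t)) := by
  have h := continuousOn_alphaScore (T := T) ha hδ b t r
  unfold putTheta
  fun_prop

lemma abs_mul_stdNormalCDF_le (p x : ℝ) : |p * stdNormalCDF x| ≤ |p| := by
  rw [abs_mul, abs_of_nonneg (stdNormalCDF_nonneg x)]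
  exact mul_le_of_le_one_right (abs_nonneg p) (stdNormalCDF_le_one x)

lemma abs_putValue_le (a δ b T u t r : ℝ) :
    |putValue a δ b T u t r| ≤ M a δ b u r + M a δ b (T - t) r := by
  refine (abs_sub _ _).trans (add_le_add ?_ ?_) <;>
  · refine (abs_mul_stdNormalCDF_le _ _).trans ?_
    rw [abs_of_pos (M_pos _ _ _ _ _)]

/-- A bound on `putValue` that vanishes at `u = T - t`. -/
lemma abs_putValue_le_abs_sub (a δ b T u t r : ℝ) :
    |putValue a δ b T u t r| ≤ |M a δ b u r - M a δ b (T - t) r|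
      + M a δ b (T - t) r * |shortRateStd a δ u * bondDuration a (T - t - u)| := by
  set x := alphaScore a δ b T u t r
  set e := shortRateStd a δ u * bondDuration a (T - t - u)
  have h : putValue a δ b T u t r = (M a δ b u r - M a δ b (T - t) r) * stdNormalCDF x
      + M a δ b (T - t) r * (stdNormalCDF x - stdNormalCDF (x - e)) := by
    simp only [putValue, x, e]
    ring
  rw [h]
  refine (abs_add_le _ _).trans (add_le_add (abs_mul_stdNormalCDF_le _ _) ?_)
  rw [abs_mul, abs_of_pos (M_pos _ _ _ _ _)]
  have := abs_stdNormalCDF_sub_le x (x - e)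
  rw [sub_sub_cancel] at this
  exact mul_le_mul_of_nonneg_left this (M_pos _ _ _ _ _).le

lemma integrableOn_putValue (ha : 0 < a) (hδ : 0 < δ) (b t r : ℝ) :
    IntegrableOn (fun u => putValue a δ b T u t r) (Set.Ioo 0 (T - t)) :=
  (continuousOn_putValue ha hδ b t r).integrableOn_Ioo_of_abs_le
    (Continuous.integrableOn_Ioo' (by fun_prop) _ _)
    fun u _ => abs_putValue_le a δ b T u t r

lemma abs_bondDuration_mul_M_le (ha : 0 < a) (δ b : ℝ) {u r r' : ℝ} (n : ℕ) (hu : 0 ≤ u)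
    (h : r' ≤ r) : |bondDuration a u ^ n * M a δ b u r| ≤ a⁻¹ ^ n * M a δ b u r' := by
  have hB := bondDuration_nonneg ha hu
  rw [abs_mul, abs_of_nonneg (pow_nonneg hB n), abs_of_pos (M_pos _ _ _ _ _)]
  gcongr
  · exact (M_pos _ _ _ _ _).le
  · exact bondDuration_le ha u
  · exact M_anti_rate ha δ b hu h

lemma abs_putDelta_le (ha : 0 < a) (δ b : ℝ) {u t r r' : ℝ} (hu : 0 < u) (hut : u < T - t)
    (h : r' ≤ r) :
    |putDelta a δ b T u t r| ≤ a⁻¹ * M a δ b u r' + a⁻¹ * M a δ b (T - t) r' := by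
  refine (abs_sub _ _).trans (add_le_add ?_ ?_) <;>
  · refine (abs_mul_stdNormalCDF_le _ _).trans ?_
    rw [neg_mul, abs_neg]
    simpa using abs_bondDuration_mul_M_le ha δ b 1 (by linarith) h

lemma abs_putGamma_le (ha : 0 < a) (hδ : 0 < δ) (b : ℝ) {u t r r' : ℝ} (hu : 0 < u)
    (hut : u < T - t) (h : r' ≤ r) :
    |putGamma a δ b T u t r| ≤ a⁻¹ ^ 2 * M a δ b u r' + a⁻¹ ^ 2 * M a δ b (T - t) r'
      + M a δ b (T - t) r' * a⁻¹ * (2 / δ ^ 2)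
        * (δ ^ 2 * Real.exp (-(a * u)) ^ 2 / (2 * shortRateStd a δ u)) := by
  have hS := shortRateStd_pos ha hδ hu
  have hB := bondDuration_nonneg ha (u := T - t - u) (by linarith)
  refine (abs_add_le _ _).trans (add_le_add ((abs_sub _ _).trans (add_le_add ?_ ?_)) ?_)
  · exact (abs_mul_stdNormalCDF_le _ _).trans (abs_bondDuration_mul_M_le ha δ b 2 hu.le h)
  · exact (abs_mul_stdNormalCDF_le _ _).trans
      (abs_bondDuration_mul_M_le ha δ b 2 (by linarith) h)
  · have e : M a δ b (T - t) r' * a⁻¹ * (2 / δ ^ 2)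
        * (δ ^ 2 * Real.exp (-(a * u)) ^ 2 / (2 * shortRateStd a δ u))
        = M a δ b (T - t) r' * 1 * a⁻¹ * (Real.exp (-(a * u)) ^ 2 / shortRateStd a δ u) := by
      field_simp
    have hM := M_pos a δ b (T - t) r
    have hM' := M_pos a δ b (T - t) r'
    have hn := stdNormalPDF_nonneg (alphaScore a δ b T u t r
      - shortRateStd a δ u * bondDuration a (T - t - u))
    rw [e, abs_of_nonneg (by positivity)]
    gcongr
    · exact M_anti_rate ha δ b (by linarith) h
    · exact stdNormalPDF_le_one _
    · exact bondDuration_le ha _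

lemma integrableOn_deriv_shortRateStd (ha : 0 < a) (hδ : 0 < δ) (c : ℝ) :
    IntegrableOn (fun u => δ ^ 2 * Real.exp (-(a * u)) ^ 2 / (2 * shortRateStd a δ u))
      (Set.Ioo 0 c) :=
  (intervalIntegral.integrableOn_deriv_of_nonneg (continuous_shortRateStd a δ).continuousOn
    (fun _ hu => hasDerivAt_shortRateStd ha hδ hu.1)
    (fun u _ => by have := shortRateStd_nonneg a δ u; positivity)).mono_set
    Set.Ioo_subset_Ioc_self

lemma hasDerivAt_integral_putValue_rate (ha : 0 < a) (hδ : 0 < δ) (b t r : ℝ) :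
    IntegrableOn (fun u => putDelta a δ b T u t r) (Set.Ioo 0 (T - t)) ∧
      HasDerivAt (fun r => ∫ u in Set.Ioo 0 (T - t), putValue a δ b T u t r)
        (∫ u in Set.Ioo 0 (T - t), putDelta a δ b T u t r) r :=
  hasDerivAt_integral_of_dominated_loc_of_deriv_le
    (bound := fun u => a⁻¹ * M a δ b u (r - 1) + a⁻¹ * M a δ b (T - t) (r - 1))
    (Ioi_mem_nhds (sub_one_lt r))
    (Eventually.of_forall fun r =>
      (continuousOn_putValue ha hδ b t r).aestronglyMeasurable measurableSet_Ioo)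
    (integrableOn_putValue ha hδ b t r)
    ((continuousOn_putDelta ha hδ b t r).aestronglyMeasurable measurableSet_Ioo)
    (ae_restrict_of_forall_mem measurableSet_Ioo fun _ hu _ hx =>
      abs_putDelta_le ha δ b hu.1 hu.2 (le_of_lt hx))
    (Continuous.integrableOn_Ioo' (by fun_prop) _ _)
    (ae_restrict_of_forall_mem measurableSet_Ioo fun _ hu x _ =>
      hasDerivAt_putValue_rate ha hδ b hu.1 hu.2 x)

lemma hasDerivAt_integral_putDelta_rate (ha : 0 < a) (hδ : 0 < δ) (b t r : ℝ) :
    IntegrableOn (fun u => putGamma a δ b T u t r) (Set.Ioo 0 (T - t)) ∧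
      HasDerivAt (fun r => ∫ u in Set.Ioo 0 (T - t), putDelta a δ b T u t r)
        (∫ u in Set.Ioo 0 (T - t), putGamma a δ b T u t r) r :=
  hasDerivAt_integral_of_dominated_loc_of_deriv_le
    (bound := fun u => a⁻¹ ^ 2 * M a δ b u (r - 1) + a⁻¹ ^ 2 * M a δ b (T - t) (r - 1)
      + M a δ b (T - t) (r - 1) * a⁻¹ * (2 / δ ^ 2)
        * (δ ^ 2 * Real.exp (-(a * u)) ^ 2 / (2 * shortRateStd a δ u)))
    (Ioi_mem_nhds (sub_one_lt r))
    (Eventually.of_forall fun r =>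
      (continuousOn_putDelta ha hδ b t r).aestronglyMeasurable measurableSet_Ioo)
    (hasDerivAt_integral_putValue_rate ha hδ b t r).1
    ((continuousOn_putGamma ha hδ b t r).aestronglyMeasurable measurableSet_Ioo)
    (ae_restrict_of_forall_mem measurableSet_Ioo fun _ hu _ hx =>
      abs_putGamma_le ha hδ b hu.1 hu.2 (le_of_lt hx))
    (Integrable.add (Continuous.integrableOn_Ioo' (by fun_prop) _ _)
      ((integrableOn_deriv_shortRateStd ha hδ _).const_mul _))
    (ae_restrict_of_forall_mem measurableSet_Ioo fun _ hu x _ =>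
      hasDerivAt_putDelta_rate ha hδ b hu.1 hu.2 x)

lemma exists_abs_putTheta_le (ha : 0 < a) (δ b T r : ℝ) :
    ∃ C, ∀ u t, 0 < t → 0 < u → u < T - t → |putTheta a δ b T u t r| ≤ C := by
  obtain ⟨K₁, hK₁⟩ := isCompact_Icc.exists_bound_of_continuousOn (s := Set.Icc 0 T)
    (f := fun τ => bondRate a δ b τ r * M a δ b τ r) (by fun_prop)
  obtain ⟨K₂, hK₂⟩ := isCompact_Icc.exists_bound_of_continuousOn (s := Set.Icc 0 T)
    (f := fun τ => M a δ b τ r) (by fun_prop)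
  obtain ⟨K₃, hK₃⟩ := isCompact_Icc.exists_bound_of_continuousOn (s := Set.Icc 0 T)
    (f := shortRateStd a δ) (by fun_prop)
  refine ⟨K₁ + K₂ * 1 * (K₃ * 1), fun u t ht hu hut => ?_⟩
  have hτ : T - t ∈ Set.Icc 0 T := ⟨by linarith, by linarith⟩
  have h₂ := hK₂ _ hτ
  have h₃ := hK₃ u ⟨hu.le, by linarith⟩
  refine (abs_sub _ _).trans (add_le_add ((abs_mul_stdNormalCDF_le _ _).trans (hK₁ _ hτ)) ?_)
  rw [abs_mul, abs_mul, abs_mul, abs_of_nonneg (stdNormalPDF_nonneg _),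
    abs_of_pos (Real.exp_pos _)]
  rw [Real.norm_eq_abs] at h₂ h₃
  have h₂' := (abs_nonneg _).trans h₂
  have h₃' := (abs_nonneg _).trans h₃
  gcongr
  · exact stdNormalPDF_nonneg _
  · exact stdNormalPDF_le_one _
  · exact exp_neg_mul_le_one ha (by linarith)

lemma continuousAt_indicator_putValue_time (ha : 0 < a) (hδ : 0 < δ) (b r : ℝ) {u : ℝ}
    (hu : 0 < u) (t : ℝ) :
    ContinuousAt (fun t => (Set.Iio (T - t)).indicator (fun u => putValue a δ b T u t r) u) t := by
  rcases lt_trichotomy u (T - t) with h | h | h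
  · refine (hasDerivAt_putValue_time ha hδ b hu h r).continuousAt.congr ?_
    filter_upwards [Iio_mem_nhds (show t < T - u by linarith)] with s hs
    rw [Set.indicator_of_mem]
    simp at hs ⊢
    linarith
  · have hzero : (Set.Iio (T - t)).indicator (fun u => putValue a δ b T u t r) u = 0 :=
      Set.indicator_of_notMem (by simp [h]) _
    rw [ContinuousAt, hzero]
    have hbound : Continuous fun s => |M a δ b u r - M a δ b (T - s) r|
        + M a δ b (T - s) r * |shortRateStd a δ u * bondDuration a (T - s - u)| := by
      fun_prop
    have hlim := hbound.tendsto t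
    simp only [← h, sub_self, bondDuration_zero, mul_zero, abs_zero, add_zero] at hlim
    refine squeeze_zero_norm (fun s => ?_) hlim
    rw [Real.norm_eq_abs]
    by_cases hs : u ∈ Set.Iio (T - s)
    · rw [Set.indicator_of_mem hs]
      exact abs_putValue_le_abs_sub a δ b T u s r
    · rw [Set.indicator_of_notMem hs, abs_zero]
      have := M_pos a δ b (T - s) r
      positivity
  · refine continuousAt_const.congr (f := fun _ => (0 : ℝ)) ?_
    filter_upwards [Ioi_mem_nhds (show T - u < t by linarith)] with s hs
    exact (Set.indicator_of_notMem (by simp at hs ⊢; linarith) _).symm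

lemma hasDerivWithinAt_indicator_putValue_time (ha : 0 < a) (hδ : 0 < δ) (b r : ℝ) {u : ℝ}
    (hu : 0 < u) (t : ℝ) :
    HasDerivWithinAt (fun t => (Set.Iio (T - t)).indicator (fun u => putValue a δ b T u t r) u)
      ((Set.Iio (T - t)).indicator (fun u => putTheta a δ b T u t r) u) (Set.Ici t) t := by
  by_cases h : u < T - t
  · rw [Set.indicator_of_mem (show u ∈ Set.Iio (T - t) from h)]
    refine ((hasDerivAt_putValue_time ha hδ b hu h r).congr_of_eventuallyEq ?_).hasDerivWithinAt
    filter_upwards [Iio_mem_nhds (show t < T - u by linarith)] with s hs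
    exact Set.indicator_of_mem (show u ∈ Set.Iio (T - s) by simp at hs ⊢; linarith) _
  · have hzero : ∀ s ∈ Set.Ici t,
        (Set.Iio (T - s)).indicator (fun u => putValue a δ b T u s r) u = 0 := fun s hs =>
      Set.indicator_of_notMem (by simp at hs h ⊢; linarith) _
    rw [Set.indicator_of_notMem (show u ∉ Set.Iio (T - t) from h)]
    exact (hasDerivWithinAt_const t _ (0 : ℝ)).congr hzero (hzero t Set.self_mem_Ici)

lemma lipschitzOnWith_indicator_putValue_time (ha : 0 < a) (hδ : 0 < δ) {b r C : ℝ}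
    (hC : ∀ u t, 0 < t → 0 < u → u < T - t → |putTheta a δ b T u t r| ≤ C) {u : ℝ}
    (hu : 0 < u) :
    LipschitzOnWith (Real.nnabs C)
      (fun t => (Set.Iio (T - t)).indicator (fun u => putValue a δ b T u t r) u)
      (Set.Ioo 0 T) := by
  refine LipschitzOnWith.of_dist_le_mul fun x hx y hy => ?_
  wlog hxy : x ≤ y generalizing x y
  · rw [dist_comm, dist_comm x]
    exact this y hy x hx (le_of_not_ge hxy)
  rw [dist_comm, dist_comm x, Real.dist_eq y, abs_of_nonneg (sub_nonneg.2 hxy), dist_eq_norm]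
  refine norm_image_sub_le_of_norm_deriv_right_le_segment
    (fun t _ => (continuousAt_indicator_putValue_time ha hδ b r hu t).continuousWithinAt)
    (fun t _ => hasDerivWithinAt_indicator_putValue_time ha hδ b r hu t)
    (fun t ht => ?_) y (Set.right_mem_Icc.2 hxy)
  rw [Real.coe_nnabs, Real.norm_eq_abs]
  by_cases h : u ∈ Set.Iio (T - t)
  · rw [Set.indicator_of_mem h]
    exact (hC u t (hx.1.trans_le ht.1) hu h).trans (le_abs_self C)
  · rw [Set.indicator_of_notMem h, abs_zero]
    exact abs_nonneg C

lemma hasDerivAt_indicator_putValue_time (ha : 0 < a) (hδ : 0 < δ) (b r : ℝ) {u t : ℝ}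
    (hu : 0 < u) (hut : u ≠ T - t) :
    HasDerivAt (fun t => (Set.Iio (T - t)).indicator (fun u => putValue a δ b T u t r) u)
      ((Set.Iio (T - t)).indicator (fun u => putTheta a δ b T u t r) u) t := by
  rcases hut.lt_or_gt with h | h
  · rw [Set.indicator_of_mem (show u ∈ Set.Iio (T - t) from h)]
    refine (hasDerivAt_putValue_time ha hδ b hu h r).congr_of_eventuallyEq ?_
    filter_upwards [Iio_mem_nhds (show t < T - u by linarith)] with s hs
    exact Set.indicator_of_mem (show u ∈ Set.Iio (T - s) by simp at hs ⊢; linarith) _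
  · rw [Set.indicator_of_notMem (by simpa using h.le)]
    refine (hasDerivAt_const t (0 : ℝ)).congr_of_eventuallyEq ?_
    filter_upwards [Ioi_mem_nhds (show T - u < t by linarith)] with s hs
    exact Set.indicator_of_notMem (by simp at hs ⊢; linarith) _

lemma Ioo_zero_inter_Iio_sub {t : ℝ} (ht : 0 < t) :
    Set.Ioo 0 T ∩ Set.Iio (T - t) = Set.Ioo 0 (T - t) := by
  rw [Set.Ioo_inter_Iio, min_eq_right (by linarith)]

lemma hasDerivAt_integral_putValue_time (ha : 0 < a) (hδ : 0 < δ) (b r : ℝ) {t : ℝ}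
    (ht : 0 < t) (htT : t < T) :
    IntegrableOn (fun u => putTheta a δ b T u t r) (Set.Ioo 0 (T - t)) ∧
      HasDerivAt (fun t => ∫ u in Set.Ioo 0 (T - t), putValue a δ b T u t r)
        (∫ u in Set.Ioo 0 (T - t), putTheta a δ b T u t r) t := by
  obtain ⟨C, hC⟩ := exists_abs_putTheta_le ha δ b T r
  have hmem : Set.Ioo 0 T ∈ nhds t := Ioo_mem_nhds ht htT
  have hind : ∀ (f : ℝ → ℝ) {s : ℝ}, 0 < s →
      ∫ u in Set.Ioo 0 T, (Set.Iio (T - s)).indicator f u = ∫ u in Set.Ioo 0 (T - s), f u := by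
    intro f s hs
    rw [setIntegral_indicator measurableSet_Iio, Ioo_zero_inter_Iio_sub hs]
  have hrestrict : ∀ {s : ℝ}, 0 < s → (volume.restrict (Set.Ioo 0 T)).restrict (Set.Iio (T - s))
      = volume.restrict (Set.Ioo 0 (T - s)) := by
    intro s hs
    rw [Measure.restrict_restrict measurableSet_Iio, Set.inter_comm, Ioo_zero_inter_Iio_sub hs]
  have hmeas : ∀ {f : ℝ → ℝ} {s : ℝ}, 0 < s → ContinuousOn f (Set.Ioo 0 (T - s)) →
      AEStronglyMeasurable ((Set.Iio (T - s)).indicator f) (volume.restrict (Set.Ioo 0 T)) := by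
    intro f s hs hf
    rw [aestronglyMeasurable_indicator_iff measurableSet_Iio, hrestrict hs]
    exact hf.aestronglyMeasurable measurableSet_Ioo
  have hint : Integrable ((Set.Iio (T - t)).indicator fun u => putValue a δ b T u t r)
      (volume.restrict (Set.Ioo 0 T)) := by
    rw [integrable_indicator_iff measurableSet_Iio, IntegrableOn, hrestrict ht]
    exact integrableOn_putValue ha hδ b t r
  have hne : ∀ᵐ u ∂(volume.restrict (Set.Ioo 0 T)), u ≠ T - t :=
    ae_restrict_of_ae (Measure.ae_ne volume (T - t))
  have key := hasDerivAt_integral_of_dominated_loc_of_lip (bound := fun _ => C)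
    (F := fun t u => (Set.Iio (T - t)).indicator (fun u => putValue a δ b T u t r) u)
    (F' := (Set.Iio (T - t)).indicator fun u => putTheta a δ b T u t r) hmem
    (by filter_upwards [hmem] with s hs using hmeas hs.1 (continuousOn_putValue ha hδ b s r))
    hint (hmeas ht (continuousOn_putTheta ha hδ b t r))
    (ae_restrict_of_forall_mem measurableSet_Ioo fun u hu =>
      lipschitzOnWith_indicator_putValue_time ha hδ hC hu.1)
    (continuous_const.integrableOn_Ioo' _ _)
    (by
      filter_upwards [hne, ae_restrict_mem measurableSet_Ioo] with u hu hu'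
      exact hasDerivAt_indicator_putValue_time ha hδ b r hu'.1 hu)
  obtain ⟨h1, h2⟩ := key
  rw [integrable_indicator_iff measurableSet_Iio, IntegrableOn, hrestrict ht] at h1
  rw [hind _ ht] at h2
  refine ⟨h1, h2.congr_of_eventuallyEq ?_⟩
  filter_upwards [hmem] with s hs
  exact (hind _ hs.1).symm

/-! ### Boundary values of the inner integral -/

lemma tendsto_putValue_left (a δ b r : ℝ) (t : ℝ) :
    Tendsto (fun u => putValue a δ b T u t r) (nhds (T - t)) (nhds 0) := by
  have hbound : Continuous fun u => |M a δ b u r - M a δ b (T - t) r|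
      + M a δ b (T - t) r * |shortRateStd a δ u * bondDuration a (T - t - u)| := by
    fun_prop
  exact squeeze_zero_norm (fun u => abs_putValue_le_abs_sub a δ b T u t r)
    (by simpa [bondDuration_zero] using hbound.tendsto (T - t))

lemma tendsto_putValue_zero (ha : 0 < a) (hδ : 0 < δ) (b r : ℝ) {t : ℝ} (htT : t < T) :
    Tendsto (fun u => putValue a δ b T u t r) (nhdsWithin 0 (Set.Ioi 0))
      (nhds ((if alphaCurve a δ b T t < r then (1 : ℝ) else 0) * (1 - M a δ b (T - t) r))) := by
  have hM : Tendsto (fun u => M a δ b u r) (nhdsWithin 0 (Set.Ioi 0)) (nhds 1) := by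
    simpa [M_zero] using ((continuous_M a δ b r).tendsto 0).mono_left nhdsWithin_le_nhds
  have he : Tendsto (fun u => shortRateStd a δ u * bondDuration a (T - t - u))
      (nhdsWithin 0 (Set.Ioi 0)) (nhds 0) := by
    have h : Continuous fun u => shortRateStd a δ u * bondDuration a (T - t - u) := by fun_prop
    simpa [shortRateStd_zero] using (h.tendsto 0).mono_left nhdsWithin_le_nhds
  have hS : Tendsto (fun u => (shortRateStd a δ u)⁻¹) (nhdsWithin 0 (Set.Ioi 0)) atTop := by
    refine Tendsto.inv_tendsto_nhdsGT_zero (tendsto_nhdsWithin_iff.2 ⟨?_, ?_⟩)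
    · simpa [shortRateStd_zero] using
        ((continuous_shortRateStd a δ).tendsto 0).mono_left nhdsWithin_le_nhds
    · filter_upwards [self_mem_nhdsWithin] with u hu using shortRateStd_pos ha hδ hu
  have hd : Tendsto (fun u => shortRateMean a δ b u r - alphaCurve a δ b T (u + t))
      (nhdsWithin 0 (Set.Ioi 0)) (nhds (r - alphaCurve a δ b T t)) := by
    have hα : ContinuousAt (fun u => alphaCurve a δ b T (u + t)) 0 :=
      ContinuousAt.comp (g := alphaCurve a δ b T)
        (by simpa using (differentiableAt_alphaCurve ha δ b htT).continuousAt) (by fun_prop)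
    have := ((continuous_shortRateMean a δ b r).continuousAt (x := 0)).tendsto.sub hα.tendsto
    simp only [shortRateMean_zero, zero_add] at this
    exact this.mono_left nhdsWithin_le_nhds
  rcases lt_trichotomy (alphaCurve a δ b T t) r with h | h | h
  · have hx : Tendsto (fun u => alphaScore a δ b T u t r) (nhdsWithin 0 (Set.Ioi 0)) atTop :=
      hd.pos_mul_atTop (sub_pos.2 h) hS
    have hN : Tendsto stdNormalCDF atTop (nhds 1) := ProbabilityTheory.tendsto_cdf_atTop _
    have hx' := hx.atTop_add he.neg
    simp only [← sub_eq_add_neg] at hx'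
    have := (hM.mul (hN.comp hx)).sub ((hN.comp hx').const_mul (M a δ b (T - t) r))
    rw [if_pos h]
    simpa [putValue] using this
  · rw [if_neg h.not_lt, zero_mul]
    have h1 : M a δ b (T - t) r = 1 := h ▸ M_alphaCurve ha δ b htT
    have hlim := (hM.sub_const (M a δ b (T - t) r)).abs.add (he.abs.const_mul (M a δ b (T - t) r))
    exact squeeze_zero_norm (fun u => abs_putValue_le_abs_sub a δ b T u t r)
      (by simpa [h1] using hlim)
  · have hx : Tendsto (fun u => alphaScore a δ b T u t r) (nhdsWithin 0 (Set.Ioi 0)) atBot :=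
      hd.neg_mul_atTop (sub_neg.2 h) hS
    have hN : Tendsto stdNormalCDF atBot (nhds 0) := ProbabilityTheory.tendsto_cdf_atBot _
    have hx' := hx.atBot_add he.neg
    simp only [← sub_eq_add_neg] at hx'
    have := (hM.mul (hN.comp hx)).sub ((hN.comp hx').const_mul (M a δ b (T - t) r))
    rw [if_neg h.not_gt]
    simpa [putValue] using this

end

/-- for every `(t,r) ∈ (0,T) × ℝ`,
`∂_t γ + a(b−r)·∂_r γ + (δ²/2)·∂_{rr} γ − r·γ + 1_{{r > α(t)}}·(1 − M(T−t,r)) = 0`. -/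
theorem gamma_solves_pde (a δ b T : ℝ) (ha : 0 < a) (hδ : 0 < δ) (hT : 0 < T) :
    ∀ t : ℝ, 0 < t → t < T → ∀ r : ℝ,
      deriv (fun t' => gammaFun a δ b T t' r) t
        + a*(b - r) * deriv (fun r' => gammaFun a δ b T t r') r
        + δ^2/2 * deriv (deriv (fun r' => gammaFun a δ b T t r')) r
        - r * gammaFun a δ b T t r
        + (if alphaCurve a δ b T t < r then (1:ℝ) else 0) * (1 - M a δ b (T - t) r)
        = 0 := by
  intro t ht htT r
  have hτ : 0 < T - t := sub_pos.2 htT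
  obtain ⟨hΘ, hΘ'⟩ := hasDerivAt_integral_putValue_time ha hδ b r ht htT
  obtain ⟨hΔ, -⟩ := hasDerivAt_integral_putValue_rate (T := T) ha hδ b t r
  obtain ⟨hΓ, hΓ'⟩ := hasDerivAt_integral_putDelta_rate (T := T) ha hδ b t r
  have hV := integrableOn_putValue (T := T) ha hδ b t r
  have e_time : deriv (fun t' => gammaFun a δ b T t' r) t
      = ∫ u in Set.Ioo 0 (T - t), putTheta a δ b T u t r := by
    refine (hΘ'.congr_of_eventuallyEq ?_).deriv
    filter_upwards [Iio_mem_nhds htT] with s hs using gammaFun_eq ha hδ b hs r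
  have e_rate : deriv (fun r' => gammaFun a δ b T t r')
      = fun r' => ∫ u in Set.Ioo 0 (T - t), putDelta a δ b T u t r' := by
    funext r'
    simp only [gammaFun_eq ha hδ b htT]
    exact (hasDerivAt_integral_putValue_rate ha hδ b t r').2.deriv
  rw [e_time, e_rate, hΓ'.deriv, gammaFun_eq ha hδ b htT]
  have hΘΔ : IntegrableOn (fun u => putTheta a δ b T u t r
      + a * (b - r) * putDelta a δ b T u t r) (Set.Ioo 0 (T - t)) := hΘ.add (hΔ.const_mul _)
  have hΘΔΓ : IntegrableOn (fun u => putTheta a δ b T u t r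
      + a * (b - r) * putDelta a δ b T u t r + δ ^ 2 / 2 * putGamma a δ b T u t r)
      (Set.Ioo 0 (T - t)) := hΘΔ.add (hΓ.const_mul _)
  have hint : IntegrableOn (fun u => putTheta a δ b T u t r
      + a * (b - r) * putDelta a δ b T u t r + δ ^ 2 / 2 * putGamma a δ b T u t r
      - r * putValue a δ b T u t r) (Set.Ioo 0 (T - t)) := hΘΔΓ.sub (hV.const_mul _)
  have hftc := integral_eq_sub_of_hasDerivAt_of_tendsto hτ
    (fun u hu => hasDerivAt_putValue_maturity ha hδ b hu.1 hu.2 r)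
    ((intervalIntegrable_iff_integrableOn_Ioo_of_le hτ.le).2 hint)
    (tendsto_putValue_zero ha hδ b r htT)
    ((tendsto_putValue_left a δ b r t).mono_left nhdsWithin_le_nhds)
  rw [intervalIntegral.integral_of_le hτ.le, integral_Ioc_eq_integral_Ioo,
    MeasureTheory.integral_sub hΘΔΓ (hV.const_mul _),
    MeasureTheory.integral_add hΘΔ (hΓ.const_mul _),
    MeasureTheory.integral_add hΘ (hΔ.const_mul _),
    MeasureTheory.integral_const_mul, MeasureTheory.integral_const_mul,
    MeasureTheory.integral_const_mul] at hftc
  linarith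
end
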